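/- (Theorem 3, main result.) The ID capacity region 𝒞 of the two-receiver BC W(y,z|x) under the average-error criterion equals the set of all rate pairs (R_𝒴, R_𝒵) ∈ [0,∞)² for which there exists a PMF P on 𝒳 with R_𝒴 ≤ I(P, W_𝒴) and R_𝒵 ≤ I(P, W_𝒵). -/

import Mathlib

open scoped Classical
open Finset

noncomputable section

/-- `P` is a probability mass function on the finite type `X`. -/
def IsPMF {X : Type*} [Fintype X] (P : X → ℝ) : Prop :=
  (∀ x, 0 ≤ P x) ∧ ∑ x, P x = 1

/-- `W` is a (discrete memoryless) channel from `X` to `Y`. -/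
def IsChannel {X Y : Type*} [Fintype Y] (W : X → Y → ℝ) : Prop :=
  (∀ x y, 0 ≤ W x y) ∧ ∀ x, ∑ y, W x y = 1

/-- The `n`-fold memoryless extension `W^n(𝐲|𝐱) = ∏ᵢ W(yᵢ|xᵢ)`. -/
def Wn {X Y : Type*} (W : X → Y → ℝ) (n : ℕ) (x : Fin n → X) (y : Fin n → Y) : ℝ :=
  ∏ i, W (x i) (y i)

/-- Mutual information `I(P,W)` (natural logarithm), with the convention that
terms with `P x * W x y = 0` contribute `0`. -/
def mutInf {X Y : Type*} [Fintype X] [Fintype Y] (P : X → ℝ) (W : X → Y → ℝ) : ℝ :=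
  ∑ x, ∑ y, if P x * W x y = 0 then 0
    else P x * W x y * Real.log (W x y / ∑ x', P x' * W x' y)

/-- The error requirements of an `(n, M, l1, l2)` ID code for the DMC `W`:
maximum probability of missed identification at most `l1`, maximum probability
of wrong identification at most `l2`. -/
def IDCodeErr {X Y M : Type*} [Fintype X] [Fintype Y]
    (n : ℕ) (W : X → Y → ℝ) (Q : M → (Fin n → X) → ℝ)
    (D : M → Finset (Fin n → Y)) (l1 l2 : ℝ) : Prop :=
  (∀ m, ∑ x, Q m x * ∑ y ∈ (D m)ᶜ, Wn W n x y ≤ l1) ∧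
  (∀ m m', m ≠ m' → ∑ x, Q m x * ∑ y ∈ D m', Wn W n x y ≤ l2)

/-- `(n, M, l1, l2)` ID code for the DMC `W`. -/
def IsIDCode {X Y M : Type*} [Fintype X] [Fintype Y]
    (n : ℕ) (W : X → Y → ℝ) (Q : M → (Fin n → X) → ℝ)
    (D : M → Finset (Fin n → Y)) (l1 l2 : ℝ) : Prop :=
  (∀ m, IsPMF (Q m)) ∧ IDCodeErr n W Q D l1 l2

/-- `W` is a two-receiver broadcast channel from `X` to `Y × Z`. -/
def IsBC {X Y Z : Type*} [Fintype Y] [Fintype Z] (W : X → Y → Z → ℝ) : Prop :=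
  (∀ x y z, 0 ≤ W x y z) ∧ ∀ x, ∑ y, ∑ z, W x y z = 1

/-- Marginal channel to terminal `Y`. -/
def margY {X Y Z : Type*} [Fintype Z] (W : X → Y → Z → ℝ) : X → Y → ℝ :=
  fun x y => ∑ z, W x y z

/-- Marginal channel to terminal `Z`. -/
def margZ {X Y Z : Type*} [Fintype Y] (W : X → Y → Z → ℝ) : X → Z → ℝ :=
  fun x z => ∑ y, W x y z

/-- `(n, ℳ_Y, ℳ_Z, l1Y, l2Y, l1Z, l2Z)` average-error ID code for the BC `W`:
every `Q my mz` is a PMF on `Xⁿ`, and the mixtures (averaging uniformly over the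
other receiver's message) form ID codes for the marginal channels. -/
def IsBCIDCode {X Y Z : Type*} [Fintype X] [Fintype Y] [Fintype Z]
    (n kY kZ : ℕ) (W : X → Y → Z → ℝ)
    (Q : Fin kY → Fin kZ → (Fin n → X) → ℝ)
    (DY : Fin kY → Finset (Fin n → Y)) (DZ : Fin kZ → Finset (Fin n → Z))
    (l1Y l2Y l1Z l2Z : ℝ) : Prop :=
  (∀ my mz, IsPMF (Q my mz)) ∧
  IDCodeErr n (margY W) (fun my x => (kZ : ℝ)⁻¹ * ∑ mz, Q my mz x) DY l1Y l2Y ∧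
  IDCodeErr n (margZ W) (fun mz x => (kY : ℝ)⁻¹ * ∑ my, Q my mz x) DZ l1Z l2Z

/-- A rate pair is achievable for the BC `W` under the average-error criterion. -/
def BCAchievable {X Y Z : Type*} [Fintype X] [Fintype Y] [Fintype Z]
    (W : X → Y → Z → ℝ) (Rp : ℝ × ℝ) : Prop :=
  0 ≤ Rp.1 ∧ 0 ≤ Rp.2 ∧
  ∀ l1Y l2Y l1Z l2Z : ℝ, 0 < l1Y → 0 < l2Y → 0 < l1Z → 0 < l2Z →
    ∃ n₀ : ℕ, ∀ n : ℕ, n₀ ≤ n →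
      ∃ (kY kZ : ℕ) (Q : Fin kY → Fin kZ → (Fin n → X) → ℝ)
        (DY : Fin kY → Finset (Fin n → Y)) (DZ : Fin kZ → Finset (Fin n → Z)),
        IsBCIDCode n kY kZ W Q DY DZ l1Y l2Y l1Z l2Z ∧
        ((0 < Rp.1 → Rp.1 ≤ (1 / n) * Real.log (Real.log kY)) ∧ (Rp.1 = 0 → kY = 1)) ∧
        ((0 < Rp.2 → Rp.2 ≤ (1 / n) * Real.log (Real.log kZ)) ∧ (Rp.2 = 0 → kZ = 1))

theorem pi_prod_nonneg {ι U : Type*} [Fintype ι] [Fintype U] {p : ι → U → ℝ} (hp : ∀ i, IsPMF (p i)) (x : ι → U) :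
    0 ≤ ∏ i, p i (x i) :=
  Finset.prod_nonneg fun i _ => (hp i).1 _

section ProductWeights

variable {ι U : Type*} [Fintype ι] [DecidableEq ι] [Fintype U]

theorem sum_pi_prod (g : ι → U → ℝ) :
    ∑ x : ι → U, ∏ i, g i (x i) = ∏ i, ∑ u, g i u := by
  rw [Finset.prod_univ_sum, Fintype.piFinset_univ]

theorem sum_pi_prod_eq_one {p : ι → U → ℝ} (hp : ∀ i, IsPMF (p i)) :
    ∑ x : ι → U, ∏ i, p i (x i) = 1 := by
  rw [sum_pi_prod]
  exact Finset.prod_eq_one fun i _ => (hp i).2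

theorem isPMF_pi {p : ι → U → ℝ} (hp : ∀ i, IsPMF (p i)) :
    IsPMF fun x : ι → U => ∏ i, p i (x i) :=
  ⟨pi_prod_nonneg hp, sum_pi_prod_eq_one hp⟩

theorem sum_pi_coord {p : ι → U → ℝ} (hp : ∀ i, IsPMF (p i)) (i : ι) (g : U → ℝ) :
    ∑ x : ι → U, (∏ k, p k (x k)) * g (x i) = ∑ u, p i u * g u := by
  have h := sum_pi_prod fun k u => p k u * if k = i then g u else 1
  simp only [Finset.prod_mul_distrib, Finset.prod_ite_eq', Finset.mem_univ, if_true] at h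
  rw [h, Finset.prod_eq_single i]
  · simp
  · intro k _ hk
    simpa [hk] using (hp k).2
  · simp

theorem sum_pi_coord_mul_eq_zero {p f : ι → U → ℝ} (hf : ∀ i, ∑ u, p i u * f i u = 0)
    {i j : ι} (hij : i ≠ j) :
    ∑ x : ι → U, (∏ k, p k (x k)) * (f i (x i) * f j (x j)) = 0 := by
  have h := sum_pi_prod fun k u =>
    p k u * ((if k = i then f k u else 1) * if k = j then f k u else 1)
  simp only [Finset.prod_mul_distrib, Finset.prod_ite_eq', Finset.mem_univ, if_true] at h
  rw [h]
  refine Finset.prod_eq_zero (Finset.mem_univ i) ?_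
  simpa [hij] using hf i

theorem sum_pi_sq {p f : ι → U → ℝ} (hp : ∀ i, IsPMF (p i))
    (hf : ∀ i, ∑ u, p i u * f i u = 0) :
    ∑ x : ι → U, (∏ k, p k (x k)) * (∑ i, f i (x i)) ^ 2 = ∑ i, ∑ u, p i u * f i u ^ 2 := by
  simp only [sq (∑ i, f i _), Finset.sum_mul_sum]
  simp only [Finset.mul_sum]
  rw [Finset.sum_comm]
  refine Finset.sum_congr rfl fun i _ => ?_
  rw [Finset.sum_comm, Finset.sum_eq_single i]
  · simpa only [sq] using sum_pi_coord hp i fun u => f i u * f i u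
  · intro j _ hj
    exact sum_pi_coord_mul_eq_zero hf hj.symm
  · simp

theorem variance_le {p : U → ℝ} (hp : IsPMF p) (f : U → ℝ) :
    ∑ u, p u * (f u - ∑ v, p v * f v) ^ 2 ≤ ∑ u, p u * f u ^ 2 := by
  have key : ∀ μ : ℝ, ∑ u, p u * (f u - μ) ^ 2
      = ∑ u, p u * f u ^ 2 - 2 * μ * ∑ u, p u * f u + μ ^ 2 * ∑ u, p u := fun μ => by
    rw [Finset.mul_sum, Finset.mul_sum, ← Finset.sum_sub_distrib, ← Finset.sum_add_distrib]
    exact Finset.sum_congr rfl fun u _ => by ring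
  rw [key, hp.2]
  nlinarith [sq_nonneg (∑ v, p v * f v)]

theorem centered {p : U → ℝ} (hp : IsPMF p) (f : U → ℝ) :
    ∑ u, p u * (f u - ∑ v, p v * f v) = 0 := by
  simp only [mul_sub, Finset.sum_sub_distrib, ← Finset.sum_mul, hp.2, one_mul, sub_self]

theorem chebyshev_pi {p : ι → U → ℝ} (hp : ∀ i, IsPMF (p i)) (f : ι → U → ℝ) {B t : ℝ}
    (ht : 0 < t) (hB : ∀ i, ∑ u, p i u * f i u ^ 2 ≤ B) :
    ∑ x : ι → U with t ≤ |∑ i, f i (x i) - ∑ i, ∑ u, p i u * f i u|, ∏ i, p i (x i)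
      ≤ Fintype.card ι * B / t ^ 2 := by
  have hsq := sum_pi_sq hp (f := fun i u => f i u - ∑ v, p i v * f i v)
    fun i => centered (hp i) (f i)
  have hle : ∑ i, ∑ u, p i u * (f i u - ∑ v, p i v * f i v) ^ 2 ≤ Fintype.card ι * B := by
    refine (Finset.sum_le_sum fun i _ => (variance_le (hp i) (f i)).trans (hB i)).trans ?_
    simp
  rw [← hsq] at hle
  rw [le_div_iff₀ (by positivity), Finset.sum_mul]
  refine le_trans (le_trans (Finset.sum_le_sum fun x hx => ?_)
    (Finset.sum_le_univ_sum_of_nonneg fun x =>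
      mul_nonneg (pi_prod_nonneg hp x) (sq_nonneg _))) hle
  rw [Finset.mem_filter] at hx
  refine mul_le_mul_of_nonneg_left ?_ (pi_prod_nonneg hp x)
  rw [Finset.sum_sub_distrib, ← sq_abs (∑ i, f i (x i) - _)]
  exact pow_le_pow_left₀ ht.le hx.2 2

theorem exp_mul_le_chord {s a : ℝ} (h0 : 0 ≤ a) (h1 : a ≤ 1) :
    Real.exp (s * a) ≤ 1 + Real.exp s * a := by
  have h := convexOn_exp.2 (Set.mem_univ (0 : ℝ)) (Set.mem_univ s) (sub_nonneg.2 h1) h0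
    (by ring)
  simp only [smul_eq_mul, mul_zero, zero_add, Real.exp_zero, mul_one] at h
  rw [mul_comm s a]
  nlinarith

/-- Exponential concentration for sums of independent variables with very small means. -/
theorem concentration_pi {p : ι → U → ℝ} (hp : ∀ i, IsPMF (p i)) {f : ι → U → ℝ}
    (h0 : ∀ i u, 0 ≤ f i u) (h1 : ∀ i u, f i u ≤ 1) {ε τ M : ℝ} (hε : 0 < ε)
    (hτ : Real.exp (2 / ε) * τ ≤ 1) (V : Finset ι) (hV : (V.card : ℝ) ≤ M)
    (hm : ∀ i, ∑ u, p i u * f i u ≤ τ) :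
    ∑ x : ι → U with ε * M ≤ ∑ i ∈ V, f i (x i), ∏ i, p i (x i) ≤ Real.exp (-M) := by
  set s := 2 / ε with hs
  have hs0 : 0 < s := by positivity
  have hsε : s * ε = 2 := by rw [hs]; field_simp
  have hstep : ∀ i, ∑ u, p i u * Real.exp (s * f i u) ≤ Real.exp 1 := fun i => by
    calc ∑ u, p i u * Real.exp (s * f i u)
        ≤ ∑ u, (p i u + Real.exp s * (p i u * f i u)) := Finset.sum_le_sum fun u _ => by
          nlinarith [mul_le_mul_of_nonneg_left (exp_mul_le_chord (s := s) (h0 i u) (h1 i u))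
            ((hp i).1 u)]
      _ = 1 + Real.exp s * ∑ u, p i u * f i u := by
          rw [Finset.sum_add_distrib, (hp i).2, Finset.mul_sum]
      _ ≤ 1 + Real.exp s * τ := by gcongr; exact hm i
      _ ≤ 1 + 1 := by linarith
      _ ≤ Real.exp 1 := by linarith [Real.add_one_le_exp (1 : ℝ)]
  have hmgf : ∑ x : ι → U, (∏ i, p i (x i)) * Real.exp (s * ∑ i ∈ V, f i (x i))
      ≤ Real.exp M := by
    calc ∑ x : ι → U, (∏ i, p i (x i)) * Real.exp (s * ∑ i ∈ V, f i (x i))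
        = ∑ x : ι → U, ∏ i, p i (x i) * (if i ∈ V then Real.exp (s * f i (x i)) else 1) := by
          refine Finset.sum_congr rfl fun x _ => ?_
          rw [Finset.prod_mul_distrib, Finset.mul_sum, Real.exp_sum]
          simp
      _ = ∏ i, ∑ u, p i u * (if i ∈ V then Real.exp (s * f i u) else 1) :=
          sum_pi_prod fun i u => p i u * (if i ∈ V then Real.exp (s * f i u) else 1)
      _ ≤ ∏ i, if i ∈ V then Real.exp 1 else 1 := by
          refine Finset.prod_le_prod (fun i _ => Finset.sum_nonneg fun u _ =>
            mul_nonneg ((hp i).1 u) (by split_ifs <;> positivity)) fun i _ => ?_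
          split_ifs with h
          · exact hstep i
          · simp [(hp i).2]
      _ = Real.exp V.card := by
          simp [← Real.exp_nat_mul]
      _ ≤ Real.exp M := Real.exp_le_exp.2 hV
  calc ∑ x : ι → U with ε * M ≤ ∑ i ∈ V, f i (x i), ∏ i, p i (x i)
      ≤ ∑ x : ι → U with ε * M ≤ ∑ i ∈ V, f i (x i),
          (∏ i, p i (x i)) * Real.exp (s * ∑ i ∈ V, f i (x i)) * Real.exp (-(2 * M)) := by
        refine Finset.sum_le_sum fun x hx => ?_
        rw [mul_assoc, ← Real.exp_add]
        refine le_mul_of_one_le_right (pi_prod_nonneg hp x) (Real.one_le_exp ?_)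
        have := mul_le_mul_of_nonneg_left (Finset.mem_filter.1 hx).2 hs0.le
        rw [← mul_assoc, hsε] at this
        linarith
    _ ≤ ∑ x : ι → U,
          (∏ i, p i (x i)) * Real.exp (s * ∑ i ∈ V, f i (x i)) * Real.exp (-(2 * M)) :=
        Finset.sum_le_univ_sum_of_nonneg fun x =>
          mul_nonneg (mul_nonneg (pi_prod_nonneg hp x) (Real.exp_pos _).le) (Real.exp_pos _).le
    _ ≤ Real.exp M * Real.exp (-(2 * M)) := by
        rw [← Finset.sum_mul]
        gcongr
    _ = Real.exp (-M) := by rw [← Real.exp_add]; ring_nf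

end ProductWeights

section Covering

variable {U V : Type*} [Fintype U] [Fintype V]

theorem IsPMF.exists_le {p : U → ℝ} (hp : IsPMF p) {f : U → ℝ} {c : ℝ}
    (h : ∑ u, p u * f u ≤ c) : ∃ u, f u ≤ c := by
  by_contra! hc
  have h1 : ∀ u, p u * c ≤ p u * f u := fun u => mul_le_mul_of_nonneg_left (hc u).le (hp.1 u)
  have h2 : ∑ u, p u * c = c := by rw [← Finset.sum_mul, hp.2, one_mul]
  have h3 : ∑ u, p u * f u = ∑ u, p u * c :=
    le_antisymm (h.trans h2.ge) (Finset.sum_le_sum fun u _ => h1 u)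
  have h4 := (Finset.sum_eq_sum_iff_of_le fun u _ => h1 u).1 h3.symm
  have h5 : ∀ u, p u = 0 := fun u => by
    by_contra h0
    have := mul_left_cancel₀ h0 (h4 u (Finset.mem_univ u))
    linarith [hc u]
  have := hp.2
  simp [h5] at this

theorem empirical_mean_sq_le {Q : U → ℝ} (hQ : IsPMF Q) (g : U → ℝ) {M : ℕ} (hM : 0 < M) :
    ∑ x : Fin M → U, (∏ i, Q (x i)) * ((M : ℝ)⁻¹ * ∑ i, g (x i) - ∑ u, Q u * g u) ^ 2
      ≤ (M : ℝ)⁻¹ * ∑ u, Q u * g u ^ 2 := by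
  have hMr : (0 : ℝ) < M := by exact_mod_cast hM
  have hsq := sum_pi_sq (ι := Fin M) (p := fun _ => Q) (f := fun _ u => g u - ∑ v, Q v * g v)
    (fun _ => hQ) fun _ => centered hQ g
  have heq : ∀ x : Fin M → U, (∏ i, Q (x i)) * ((M : ℝ)⁻¹ * ∑ i, g (x i) - ∑ u, Q u * g u) ^ 2
      = ((M : ℝ)⁻¹) ^ 2 * ((∏ i, Q (x i)) * (∑ i, (g (x i) - ∑ u, Q u * g u)) ^ 2) := fun x => by
    rw [Finset.sum_sub_distrib, Finset.sum_const, Finset.card_univ, Fintype.card_fin,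
      nsmul_eq_mul]
    field_simp
  rw [Finset.sum_congr rfl fun x _ => heq x, ← Finset.mul_sum, hsq, Finset.sum_const,
    Finset.card_univ, Fintype.card_fin, nsmul_eq_mul]
  calc ((M : ℝ)⁻¹) ^ 2 * (M * ∑ u, Q u * (g u - ∑ v, Q v * g v) ^ 2)
      = (M : ℝ)⁻¹ * ∑ u, Q u * (g u - ∑ v, Q v * g v) ^ 2 := by field_simp
    _ ≤ _ := mul_le_mul_of_nonneg_left (variance_le hQ g) (by positivity)

theorem empirical_mean_abs_le {Q : U → ℝ} (hQ : IsPMF Q) {g : U → ℝ} (h0 : ∀ u, 0 ≤ g u)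
    {q Γ ε : ℝ} (hq : 0 ≤ q) (hε : 0 < ε) (hΓ : ∀ u, g u ≤ Γ * q) {M : ℕ} (hM0 : 0 < M)
    (hM : Γ ≤ ε ^ 2 * M) :
    ∑ x : Fin M → U, (∏ i, Q (x i)) * |(M : ℝ)⁻¹ * ∑ i, g (x i) - ∑ u, Q u * g u|
      ≤ ε * ((q + ∑ u, Q u * g u) / 2) := by
  have hMr : (0 : ℝ) < M := by exact_mod_cast hM0
  rcases hq.eq_or_lt with hy | hy
  · have hw : ∀ u, g u = 0 := fun u => le_antisymm (by simpa [← hy] using hΓ u) (h0 u)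
    simp [hw, ← hy]
  have hP : ∑ x : Fin M → U, ∏ i, Q (x i) = 1 :=
    sum_pi_prod_eq_one (p := fun _ => Q) fun _ => hQ
  have hP0 : ∀ x : Fin M → U, 0 ≤ ∏ i, Q (x i) := pi_prod_nonneg (p := fun _ => Q) fun _ => hQ
  have hv : (M : ℝ)⁻¹ * ∑ u, Q u * g u ^ 2 ≤ ε ^ 2 * (q * ∑ u, Q u * g u) := by
    rw [inv_mul_le_iff₀ hMr, Finset.mul_sum, Finset.mul_sum, Finset.mul_sum]
    refine Finset.sum_le_sum fun u _ => ?_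
    have h2 : g u ≤ ε ^ 2 * M * q := (hΓ u).trans (mul_le_mul_of_nonneg_right hM hq)
    calc Q u * g u ^ 2 = (Q u * g u) * g u := by ring
      _ ≤ (Q u * g u) * (ε ^ 2 * M * q) :=
        mul_le_mul_of_nonneg_left h2 (mul_nonneg (hQ.1 u) (h0 u))
      _ = _ := by ring
  have hvar := (empirical_mean_sq_le hQ g hM0).trans hv
  generalize ∑ u, Q u * g u = r at *
  have h2 : (∑ x : Fin M → U, (∏ i, Q (x i)) * |(M : ℝ)⁻¹ * ∑ i, g (x i) - r|) * (2 * ε * q)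
      ≤ ε ^ 2 * (q * r) + ε ^ 2 * q ^ 2 := by
    refine le_trans ?_ (add_le_add_left hvar _)
    rw [Finset.sum_mul, ← mul_one (ε ^ 2 * q ^ 2), ← hP, Finset.mul_sum,
      ← Finset.sum_add_distrib]
    refine Finset.sum_le_sum fun x _ => ?_
    have := mul_le_mul_of_nonneg_left
      (two_mul_le_add_sq |(M : ℝ)⁻¹ * ∑ i, g (x i) - r| (ε * q)) (hP0 x)
    rw [sq_abs] at this
    linarith
  have h3 : (0 : ℝ) < 2 * ε * q := by positivity
  rw [← mul_le_mul_iff_left₀ h3]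
  linarith

theorem soft_covering {Q : U → ℝ} (hQ : IsPMF Q) {w : U → V → ℝ} (h0 : ∀ u y, 0 ≤ w u y)
    (h1 : ∀ u, ∑ y, w u y ≤ 1) {q : V → ℝ} (hq0 : ∀ y, 0 ≤ q y) (hq1 : ∑ y, q y ≤ 1)
    {Γ ε : ℝ} (hε : 0 < ε) (hΓ : ∀ u y, w u y ≤ Γ * q y) {M : ℕ} (hM0 : 0 < M)
    (hM : Γ ≤ ε ^ 2 * M) :
    ∃ x : Fin M → U, ∑ y, |(M : ℝ)⁻¹ * ∑ i, w (x i) y - ∑ u, Q u * w u y| ≤ ε := by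
  have hr1 : ∑ y, ∑ u, Q u * w u y ≤ 1 := by
    rw [Finset.sum_comm, ← hQ.2]
    refine Finset.sum_le_sum fun u _ => ?_
    rw [← Finset.mul_sum]
    exact mul_le_of_le_one_right (hQ.1 u) (h1 u)
  have hP : IsPMF fun x : Fin M → U => ∏ i, Q (x i) := isPMF_pi (p := fun _ => Q) fun _ => hQ
  refine hP.exists_le
    (f := fun x => ∑ y, |(M : ℝ)⁻¹ * ∑ i, w (x i) y - ∑ u, Q u * w u y|) ?_
  rw [Finset.sum_congr rfl fun x _ => Finset.mul_sum _ _ _, Finset.sum_comm]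
  refine (Finset.sum_le_sum fun y _ => empirical_mean_abs_le hQ (fun u => h0 u y) (hq0 y) hε
    (fun u => hΓ u y) hM0 hM).trans ?_
  rw [← Finset.mul_sum, ← Finset.sum_div, Finset.sum_add_distrib]
  nlinarith

/-- If the inputs in `S` have a short soft covering, few messages of an ID code can put
substantial weight on `S`. -/
theorem card_heavy_messages_le [DecidableEq V] {ι : Type*} [Fintype ι] {Q : ι → U → ℝ}
    (hQ : ∀ m, IsPMF (Q m))
    {w : U → V → ℝ} (hw : IsChannel w) {D : ι → Finset V} {l ε Γ : ℝ} (hε : 0 < ε)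
    (hmiss : ∀ m, ∑ x, Q m x * ∑ y ∈ (D m)ᶜ, w x y ≤ l)
    (hfalse : ∀ m m', m ≠ m' → ∑ x, Q m x * ∑ y ∈ D m', w x y ≤ l)
    {q : V → ℝ} (hq0 : ∀ y, 0 ≤ q y) (hq1 : ∑ y, q y ≤ 1) (S : Finset U)
    (hS : ∀ x ∈ S, ∑ y with Γ * q y < w x y, w x y ≤ ε) (hΓ : 0 ≤ Γ)
    {M : ℕ} (hM0 : 0 < M) (hM : Γ ≤ ε ^ 2 * M) :
    (Finset.univ.filter fun m => 2 * l + 3 * ε < ∑ x ∈ S, Q m x).card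
      ≤ Fintype.card U ^ M := by
  set w' : U → V → ℝ := fun x y => if x ∈ S ∧ w x y ≤ Γ * q y then w x y else 0 with hw'
  have hw'0 : ∀ x y, 0 ≤ w' x y := fun x y => by
    simp only [hw']; split_ifs; exacts [hw.1 x y, le_rfl]
  have hw'le : ∀ x y, w' x y ≤ w x y := fun x y => by
    simp only [hw']; split_ifs; exacts [le_rfl, hw.1 x y]
  have hw'Γ : ∀ x y, w' x y ≤ Γ * q y := fun x y => by
    simp only [hw']; split_ifs with h; exacts [h.2, mul_nonneg hΓ (hq0 y)]
  have hcov := fun m => soft_covering (hQ m) hw'0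
    (fun u => (Finset.sum_le_sum fun y _ => hw'le u y).trans (hw.2 u).le) hq0 hq1 hε hw'Γ hM0 hM
  choose c hc using hcov
  have hD : ∀ m (E : Finset V), |∑ y ∈ E, (M : ℝ)⁻¹ * ∑ i, w' (c m i) y
      - ∑ x, Q m x * ∑ y ∈ E, w' x y| ≤ ε := fun m E => by
    have : ∑ x, Q m x * ∑ y ∈ E, w' x y = ∑ y ∈ E, ∑ x, Q m x * w' x y := by
      simp only [Finset.mul_sum]; exact Finset.sum_comm
    rw [this, ← Finset.sum_sub_distrib]
    refine (Finset.abs_sum_le_sum_abs _ _).trans (le_trans ?_ (hc m))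
    exact Finset.sum_le_univ_sum_of_nonneg fun y => abs_nonneg _
  have hlow : ∀ m, ∑ x ∈ S, Q m x - l - ε ≤ ∑ x, Q m x * ∑ y ∈ D m, w' x y := fun m => by
    have h1 : ∀ x ∈ S, 1 - ∑ y ∈ (D m)ᶜ, w x y - ε ≤ ∑ y ∈ D m, w' x y := fun x hx => by
      have h2 : ∑ y ∈ D m, (w x y - w' x y) ≤ ε := by
        refine le_trans (Finset.sum_le_univ_sum_of_nonneg fun y => sub_nonneg.2 (hw'le x y))
          (le_trans (le_of_eq ?_) (hS x hx))
        rw [Finset.sum_filter]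
        refine Finset.sum_congr rfl fun y _ => ?_
        by_cases hy : w x y ≤ Γ * q y
        · simp [hw', hx, hy, not_lt.2 hy]
        · simp [hw', hy, not_le.1 hy]
      rw [Finset.sum_sub_distrib] at h2
      have := Finset.sum_add_sum_compl (D m) (w x)
      rw [hw.2 x] at this
      linarith
    have hS1 : ∑ x ∈ S, Q m x ≤ 1 := (hQ m).2 ▸ Finset.sum_le_univ_sum_of_nonneg (hQ m).1
    calc ∑ x ∈ S, Q m x - l - ε
        ≤ ∑ x ∈ S, Q m x - ∑ x ∈ S, Q m x * ∑ y ∈ (D m)ᶜ, w x y - ε * ∑ x ∈ S, Q m x := by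
          have : ∑ x ∈ S, Q m x * ∑ y ∈ (D m)ᶜ, w x y ≤ l := le_trans
            (Finset.sum_le_univ_sum_of_nonneg fun x => mul_nonneg ((hQ m).1 x)
              (Finset.sum_nonneg fun y _ => hw.1 x y)) (hmiss m)
          nlinarith
      _ = ∑ x ∈ S, Q m x * (1 - ∑ y ∈ (D m)ᶜ, w x y - ε) := by
          rw [Finset.mul_sum, ← Finset.sum_sub_distrib, ← Finset.sum_sub_distrib]
          exact Finset.sum_congr rfl fun x _ => by ring
      _ ≤ ∑ x ∈ S, Q m x * ∑ y ∈ D m, w' x y :=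
          Finset.sum_le_sum fun x hx => mul_le_mul_of_nonneg_left (h1 x hx) ((hQ m).1 x)
      _ ≤ ∑ x, Q m x * ∑ y ∈ D m, w' x y :=
          Finset.sum_le_univ_sum_of_nonneg fun x => mul_nonneg ((hQ m).1 x)
            (Finset.sum_nonneg fun y _ => hw'0 x y)
  have hup : ∀ m m', m ≠ m' → ∑ x, Q m x * ∑ y ∈ D m', w' x y ≤ l := fun m m' h =>
    le_trans (Finset.sum_le_sum fun x _ => mul_le_mul_of_nonneg_left
      (Finset.sum_le_sum fun y _ => hw'le x y) ((hQ m).1 x)) (hfalse m m' h)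
  have hcard : Fintype.card U ^ M = (Finset.univ : Finset (Fin M → U)).card := by simp
  rw [hcard]
  refine Finset.card_le_card_of_injOn c (fun _ _ => Finset.mem_coe.2 (Finset.mem_univ _)) ?_
  intro m hm m' _ hmm
  by_contra hne
  have h1 := (abs_le.1 (hD m (D m))).1
  have h2 := (abs_le.1 (hD m' (D m))).2
  rw [hmm] at h1
  have h3 := hlow m
  have h4 := hup m' m (Ne.symm hne)
  have h5 : 2 * l + 3 * ε < ∑ x ∈ S, Q m x := by simpa using hm
  linarith

end Covering

section MutualInformation

variable {X Y : Type*} [Fintype X]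

/-- The output distribution of the channel `W` under the input weights `P`. -/
def outDist (P : X → ℝ) (W : X → Y → ℝ) (y : Y) : ℝ := ∑ x, P x * W x y

/-- The information density of `(P, W)`. -/
def infoDens (P : X → ℝ) (W : X → Y → ℝ) (x : X) (y : Y) : ℝ :=
  Real.log (W x y / outDist P W y)

theorem outDist_nonneg {P : X → ℝ} (hP : ∀ x, 0 ≤ P x) {W : X → Y → ℝ}
    (hW : ∀ x y, 0 ≤ W x y) (y : Y) : 0 ≤ outDist P W y :=
  Finset.sum_nonneg fun x _ => mul_nonneg (hP x) (hW x y)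

theorem mul_le_outDist {P : X → ℝ} (hP : ∀ x, 0 ≤ P x) {W : X → Y → ℝ}
    (hW : ∀ x y, 0 ≤ W x y) (x : X) (y : Y) : P x * W x y ≤ outDist P W y :=
  Finset.single_le_sum (f := fun x => P x * W x y) (fun x _ => mul_nonneg (hP x) (hW x y))
    (Finset.mem_univ x)

variable [Fintype Y]

theorem isPMF_outDist {P : X → ℝ} (hP : IsPMF P) {W : X → Y → ℝ} (hW : IsChannel W) :
    IsPMF (outDist P W) := by
  refine ⟨outDist_nonneg hP.1 hW.1, ?_⟩
  simp only [outDist]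
  rw [Finset.sum_comm]
  simp [← Finset.mul_sum, hW.2, hP.2]

theorem IsPMF.le_one {U : Type*} [Fintype U] {p : U → ℝ} (hp : IsPMF p) (u : U) : p u ≤ 1 :=
  hp.2 ▸ Finset.single_le_sum (fun u _ => hp.1 u) (Finset.mem_univ u)

theorem mutInf_eq_sum_infoDens (P : X → ℝ) (W : X → Y → ℝ) :
    mutInf P W = ∑ x, P x * ∑ y, W x y * infoDens P W x y := by
  simp only [mutInf, Finset.mul_sum]
  refine Finset.sum_congr rfl fun x _ => Finset.sum_congr rfl fun y _ => ?_
  rw [← mul_assoc]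
  split_ifs with h
  · rw [h, zero_mul]
  · rfl

theorem mutInf_eq_negMulLog {P : X → ℝ} (hP : ∀ x, 0 ≤ P x) {W : X → Y → ℝ}
    (hW : ∀ x y, 0 ≤ W x y) :
    mutInf P W = ∑ y, Real.negMulLog (outDist P W y)
      - ∑ x, P x * ∑ y, Real.negMulLog (W x y) := by
  have h : ∀ x y, P x * (W x y * infoDens P W x y)
      = -(P x * W x y * Real.log (outDist P W y)) - P x * Real.negMulLog (W x y) := fun x y => by
    rcases eq_or_ne (P x * W x y) 0 with h0 | h0
    · rcases mul_eq_zero.1 h0 with h1 | h1 <;> simp [h1]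
    · have hout : outDist P W y ≠ 0 :=
        (lt_of_lt_of_le (lt_of_le_of_ne (mul_nonneg (hP x) (hW x y)) h0.symm)
          (mul_le_outDist hP hW x y)).ne'
      rw [infoDens, Real.log_div (right_ne_zero_of_mul h0) hout, Real.negMulLog]
      ring
  rw [mutInf_eq_sum_infoDens]
  simp only [Finset.mul_sum, h, Finset.sum_sub_distrib]
  congr 1
  rw [Finset.sum_comm]
  refine Finset.sum_congr rfl fun y _ => ?_
  rw [Finset.sum_neg_distrib, ← Finset.sum_mul, Real.negMulLog, neg_mul, outDist]

theorem continuousOn_mutInf {W : X → Y → ℝ} (hW : ∀ x y, 0 ≤ W x y) :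
    ContinuousOn (fun P => mutInf P W) {P : X → ℝ | IsPMF P} := by
  have h : Continuous fun P : X → ℝ => ∑ y, Real.negMulLog (outDist P W y)
      - ∑ x, P x * ∑ y, Real.negMulLog (W x y) := by
    unfold outDist
    have := Real.continuous_negMulLog
    fun_prop
  exact h.continuousOn.congr fun P hP => mutInf_eq_negMulLog hP.1 hW

theorem mutInf_nonneg {P : X → ℝ} (hP : IsPMF P) {W : X → Y → ℝ} (hW : IsChannel W) :
    0 ≤ mutInf P W := by
  have h : ∀ x y, P x * W x y - P x * outDist P W y ≤ P x * (W x y * infoDens P W x y) :=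
    fun x y => by
    have hPx := hP.1 x
    have ho := outDist_nonneg hP.1 hW.1 y
    rcases (mul_nonneg hPx (hW.1 x y)).eq_or_lt with h0 | h0
    · rw [← mul_assoc, ← h0]
      nlinarith [mul_nonneg hPx ho]
    · have hout : 0 < outDist P W y := h0.trans_le (mul_le_outDist hP.1 hW.1 x y)
      have hWp : 0 < W x y := pos_of_mul_pos_right h0 hPx
      have hlog := Real.one_sub_inv_le_log_of_pos (div_pos hWp hout)
      have : W x y * (1 - (W x y / outDist P W y)⁻¹) = W x y - outDist P W y := by
        field_simp
      have h2 := mul_le_mul_of_nonneg_left hlog hWp.le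
      rw [this] at h2
      have h3 := mul_le_mul_of_nonneg_left h2 hPx
      rw [mul_sub] at h3
      exact h3
  rw [mutInf_eq_sum_infoDens]
  have h2 : ∑ x, ∑ y, (P x * W x y - P x * outDist P W y) = 0 := by
    simp [Finset.sum_sub_distrib, ← Finset.mul_sum, hW.2, (isPMF_outDist hP hW).2]
  rw [← h2]
  refine Finset.sum_le_sum fun x _ => ?_
  rw [Finset.mul_sum]
  exact Finset.sum_le_sum fun y _ => h x y

theorem isChannel_Wn {n : ℕ} {X Y : Type*} [Fintype Y] {W : X → Y → ℝ} (hW : IsChannel W) :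
    IsChannel (Wn W n) := by
  refine ⟨fun x y => Finset.prod_nonneg fun i _ => hW.1 _ _, fun x => ?_⟩
  exact sum_pi_prod_eq_one (p := fun i => W (x i)) fun i => ⟨hW.1 _, hW.2 _⟩

end MutualInformation

section Types

variable {X Y : Type*} [Fintype X]

/-- The empirical distribution (type) of a word. -/
def empDist {n : ℕ} (x : Fin n → X) (a : X) : ℝ := (Finset.univ.filter fun i => x i = a).card / n

theorem sum_comp_eq_empDist {n : ℕ} (hn : 0 < n) (x : Fin n → X) (g : X → ℝ) :
    ∑ i, g (x i) = n * ∑ a, empDist x a * g a := by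
  have hn' : (n : ℝ) ≠ 0 := by positivity
  rw [Finset.mul_sum, ← Finset.sum_fiberwise Finset.univ x]
  refine Finset.sum_congr rfl fun a _ => ?_
  rw [Finset.sum_congr rfl fun i hi => by rw [(Finset.mem_filter.1 hi).2], Finset.sum_const,
    nsmul_eq_mul, empDist]
  field_simp

theorem isPMF_empDist {n : ℕ} (hn : 0 < n) (x : Fin n → X) : IsPMF (empDist x) := by
  refine ⟨fun a => by unfold empDist; positivity, ?_⟩
  have h := sum_comp_eq_empDist hn x fun _ => 1
  have hn' : (n : ℝ) ≠ 0 := by positivity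
  simp only [Finset.sum_const, Finset.card_univ, Fintype.card_fin, nsmul_eq_mul, mul_one] at h
  field_simp at h
  exact h.symm

theorem inv_le_empDist {X : Type*} {n : ℕ} (x : Fin n → X) (i : Fin n) : (n : ℝ)⁻¹ ≤ empDist x (x i) := by
  rw [empDist, inv_eq_one_div]
  gcongr
  exact_mod_cast Finset.card_pos.2 ⟨i, by simp⟩

theorem card_types_le (n : ℕ) :
    (Finset.univ.image (empDist : (Fin n → X) → X → ℝ)).card ≤ (n + 1) ^ Fintype.card X := by
  have hlt : ∀ (x : Fin n → X) a, (Finset.univ.filter fun i => x i = a).card < n + 1 :=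
    fun x a => Nat.lt_succ_of_le ((Finset.card_le_univ _).trans (by simp))
  have h : Finset.univ.image (empDist : (Fin n → X) → X → ℝ)
      ⊆ Finset.univ.image fun (t : X → Fin (n + 1)) a => ((t a : ℕ) : ℝ) / n := by
    intro P hP
    obtain ⟨x, -, rfl⟩ := Finset.mem_image.1 hP
    exact Finset.mem_image.2 ⟨fun a => ⟨_, hlt x a⟩, Finset.mem_univ _, rfl⟩
  refine (Finset.card_le_card h).trans (Finset.card_image_le.trans ?_)
  simp

variable [Fintype Y]

theorem sq_infoDens_empDist_le {n : ℕ} (hn : 0 < n) {W : X → Y → ℝ} (hW : IsChannel W)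
    (x : Fin n → X) (i : Fin n) :
    ∑ y, W (x i) y * infoDens (empDist x) W (x i) y ^ 2
      ≤ (Real.log n + ∑ a, ∑ y, |Real.log (W a y)|) ^ 2 := by
  set c := ∑ a, ∑ y, |Real.log (W a y)|
  have hP := isPMF_empDist hn x
  have hn1 : (1 : ℝ) ≤ n := by exact_mod_cast hn
  have key : ∀ y, W (x i) y * infoDens (empDist x) W (x i) y ^ 2
      ≤ W (x i) y * (Real.log n + c) ^ 2 := fun y => by
    rcases (hW.1 (x i) y).eq_or_lt with h0 | h0
    · simp [← h0]
    refine mul_le_mul_of_nonneg_left (sq_le_sq' ?_ ?_) h0.le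
    all_goals
      have hle : (n : ℝ)⁻¹ * W (x i) y ≤ outDist (empDist x) W y :=
        (mul_le_mul_of_nonneg_right (inv_le_empDist x i) h0.le).trans
          (mul_le_outDist hP.1 hW.1 _ _)
      have hout : 0 < outDist (empDist x) W y := lt_of_lt_of_le (by positivity) hle
      have hlogn : 0 ≤ Real.log n := Real.log_nonneg hn1
      have hc : |Real.log (W (x i) y)| ≤ c :=
        (Finset.single_le_sum (f := fun y => |Real.log (W (x i) y)|)
          (fun y _ => abs_nonneg _) (Finset.mem_univ y)).trans
          (Finset.single_le_sum (f := fun a => ∑ y, |Real.log (W a y)|)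
            (fun a _ => Finset.sum_nonneg fun y _ => abs_nonneg _) (Finset.mem_univ (x i)))
      rw [infoDens]
    · rw [Real.log_div h0.ne' hout.ne']
      have h1 : Real.log (outDist (empDist x) W y) ≤ 0 :=
        Real.log_nonpos hout.le ((isPMF_outDist hP hW).le_one y)
      linarith [neg_abs_le (Real.log (W (x i) y))]
    · have h1 : W (x i) y / outDist (empDist x) W y ≤ n := by
        rw [div_le_iff₀ hout]
        rwa [inv_mul_le_iff₀ (by positivity)] at hle
      have := Real.log_le_log (by positivity) h1
      linarith [abs_nonneg (Real.log (W (x i) y))]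
  refine (Finset.sum_le_sum fun y _ => key y).trans ?_
  rw [← Finset.sum_mul, hW.2, one_mul]

theorem Wn_infoDens_tail_le {n : ℕ} (hn : 0 < n) {W : X → Y → ℝ} (hW : IsChannel W)
    (x : Fin n → X) {t : ℝ} (ht : 0 < t) :
    ∑ y : Fin n → Y with n * mutInf (empDist x) W + t
        ≤ ∑ i, infoDens (empDist x) W (x i) (y i), Wn W n x y
      ≤ n * (Real.log n + ∑ a, ∑ y, |Real.log (W a y)|) ^ 2 / t ^ 2 := by
  have h := chebyshev_pi (p := fun i => W (x i)) (fun i => ⟨hW.1 _, hW.2 _⟩)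
    (fun i => infoDens (empDist x) W (x i)) ht (sq_infoDens_empDist_le hn hW x)
  rw [Fintype.card_fin, sum_comp_eq_empDist hn x fun a => ∑ y, W a y * infoDens (empDist x) W a y,
    ← mutInf_eq_sum_infoDens] at h
  refine le_trans (Finset.sum_le_sum_of_subset_of_nonneg ?_ fun y _ _ =>
    (isChannel_Wn hW).1 x y) h
  refine Finset.monotone_filter_right _ fun y _ hy => ?_
  exact le_trans (by linarith) (le_abs_self _)

/-- The uniform mixture over all types of the induced output distributions. -/
def univOut (W : X → Y → ℝ) (n : ℕ) (y : Fin n → Y) : ℝ :=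
  ((n + 1) ^ Fintype.card X : ℝ)⁻¹ *
    ∑ P ∈ Finset.univ.image (empDist : (Fin n → X) → X → ℝ), ∏ i, outDist P W (y i)

theorem prod_outDist_nonneg_of_type {n : ℕ} (hn : 0 < n) {W : X → Y → ℝ} (hW : IsChannel W)
    {P : X → ℝ} (hP : P ∈ Finset.univ.image (empDist : (Fin n → X) → X → ℝ)) (y : Fin n → Y) :
    0 ≤ ∏ i, outDist P W (y i) := by
  obtain ⟨x, -, rfl⟩ := Finset.mem_image.1 hP
  exact Finset.prod_nonneg fun i _ => outDist_nonneg (isPMF_empDist hn x).1 hW.1 _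

theorem univOut_nonneg {n : ℕ} (hn : 0 < n) {W : X → Y → ℝ} (hW : IsChannel W)
    (y : Fin n → Y) : 0 ≤ univOut W n y :=
  mul_nonneg (by positivity) (Finset.sum_nonneg fun _ hP =>
    prod_outDist_nonneg_of_type hn hW hP y)

theorem sum_univOut_le_one {n : ℕ} (hn : 0 < n) {W : X → Y → ℝ} (hW : IsChannel W) :
    ∑ y, univOut W n y ≤ 1 := by
  simp only [univOut]
  rw [← Finset.mul_sum, Finset.sum_comm, inv_mul_le_iff₀ (by positivity), mul_one]
  have h : ∀ P ∈ Finset.univ.image (empDist : (Fin n → X) → X → ℝ),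
      ∑ y : Fin n → Y, ∏ i, outDist P W (y i) = 1 := fun P hP => by
    obtain ⟨x, -, rfl⟩ := Finset.mem_image.1 hP
    exact sum_pi_prod_eq_one (p := fun _ => outDist (empDist x) W) fun _ =>
      isPMF_outDist (isPMF_empDist hn x) hW
  rw [Finset.sum_congr rfl h]
  simpa using mod_cast card_types_le (X := X) n

theorem Wn_excess_le {n : ℕ} (hn : 0 < n) {W : X → Y → ℝ} (hW : IsChannel W)
    (x : Fin n → X) {t Γ : ℝ} (ht : 0 < t)
    (hΓ : (n + 1) ^ Fintype.card X * Real.exp (n * mutInf (empDist x) W + t) ≤ Γ) :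
    ∑ y with Γ * univOut W n y < Wn W n x y, Wn W n x y
      ≤ n * (Real.log n + ∑ a, ∑ y, |Real.log (W a y)|) ^ 2 / t ^ 2 := by
  refine le_trans (Finset.sum_le_sum_of_subset_of_nonneg ?_ fun y _ _ =>
    (isChannel_Wn hW).1 x y) (Wn_infoDens_tail_le hn hW x ht)
  refine Finset.monotone_filter_right _ fun y _ hy => ?_
  have hΓ0 : 0 ≤ Γ := le_trans (by positivity) hΓ
  have hpos : 0 < Wn W n x y :=
    lt_of_le_of_lt (mul_nonneg hΓ0 (univOut_nonneg hn hW y)) hy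
  have hWi : ∀ i, 0 < W (x i) (y i) := fun i => lt_of_le_of_ne (hW.1 _ _) fun h0 =>
    hpos.ne' (Finset.prod_eq_zero (Finset.mem_univ i) h0.symm)
  have hout : ∀ i, 0 < outDist (empDist x) W (y i) := fun i =>
    lt_of_lt_of_le (mul_pos (lt_of_lt_of_le (by positivity) (inv_le_empDist x i)) (hWi i))
      (mul_le_outDist (isPMF_empDist hn x).1 hW.1 _ _)
  have hq : ((n + 1) ^ Fintype.card X : ℝ)⁻¹ * ∏ i, outDist (empDist x) W (y i)
      ≤ univOut W n y := by
    refine mul_le_mul_of_nonneg_left ?_ (by positivity)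
    exact Finset.single_le_sum (f := fun P => ∏ i, outDist P W (y i))
      (fun P hP => prod_outDist_nonneg_of_type hn hW hP y)
      (Finset.mem_image_of_mem _ (Finset.mem_univ x))
  have hprod : 0 < ∏ i, outDist (empDist x) W (y i) := Finset.prod_pos fun i _ => hout i
  have h1 : Real.exp (n * mutInf (empDist x) W + t) * ∏ i, outDist (empDist x) W (y i)
      ≤ Wn W n x y := by
    refine le_trans ?_ hy.le
    refine le_trans ?_ (mul_le_mul hΓ hq (by positivity) hΓ0)
    field_simp
    exact le_rfl
  have h2 : Real.exp (n * mutInf (empDist x) W + t)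
      ≤ ∏ i, W (x i) (y i) / outDist (empDist x) W (y i) := by
    rw [Finset.prod_div_distrib, le_div_iff₀ hprod]
    exact h1
  have h3 := Real.log_le_log (Real.exp_pos _) h2
  rw [Real.log_exp, Real.log_prod fun i _ => (div_pos (hWi i) (hout i)).ne'] at h3
  exact h3

/-- Counting bound: only few messages of an ID code can put substantial weight on words whose
type has mutual information below `ρ`. -/
theorem card_low_information_messages_le {n : ℕ} (hn : 0 < n) {W : X → Y → ℝ}
    (hW : IsChannel W) {ι : Type*} [Fintype ι] {Q : ι → (Fin n → X) → ℝ}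
    (hQ : ∀ m, IsPMF (Q m)) {D : ι → Finset (Fin n → Y)} {l ε : ℝ} (hε : 0 < ε)
    (herr : IDCodeErr n W Q D l l) {ρ t : ℝ} (ht : 0 < t)
    (htail : n * (Real.log n + ∑ a, ∑ y, |Real.log (W a y)|) ^ 2 / t ^ 2 ≤ ε)
    {M : ℕ} (hM0 : 0 < M)
    (hM : (n + 1) ^ Fintype.card X * Real.exp (n * ρ + t) ≤ ε ^ 2 * M) :
    (Finset.univ.filter fun m =>
        2 * l + 3 * ε < ∑ x with mutInf (empDist x) W < ρ, Q m x).card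
      ≤ Fintype.card X ^ (n * M) := by
  have h := card_heavy_messages_le hQ (isChannel_Wn hW) hε herr.1 herr.2
    (univOut_nonneg hn hW) (sum_univOut_le_one hn hW)
    (Finset.univ.filter fun x => mutInf (empDist x) W < ρ)
    (Γ := (n + 1) ^ Fintype.card X * Real.exp (n * ρ + t)) (fun x hx => ?_)
    (by positivity) hM0 hM
  · rw [pow_mul]
    simpa using h
  · refine (Wn_excess_le hn hW x ht ?_).trans htail
    have := (Finset.mem_filter.1 hx).2
    gcongr

end Types

section Converse

open Filter Topology

theorem eventually_poly_le_exp (C : ℝ) (d : ℕ) {b : ℝ} (hb : 0 < b) :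
    ∀ᶠ n : ℕ in atTop, C * ((n : ℝ) + 1) ^ d ≤ Real.exp (b * n) := by
  have h := (isLittleO_pow_exp_pos_mul_atTop d hb).comp_tendsto
    (tendsto_atTop_add_const_right atTop (1 : ℝ) tendsto_natCast_atTop_atTop)
  have hc : 0 < (Real.exp b * (|C| + 1))⁻¹ := by positivity
  filter_upwards [h.def hc] with n hn
  simp only [Function.comp_apply, Real.norm_eq_abs, Real.abs_exp] at hn
  rw [abs_of_nonneg (by positivity), mul_add b, Real.exp_add, mul_one b, mul_inv] at hn
  have h2 : (|C| + 1) * ((n : ℝ) + 1) ^ d ≤ Real.exp (b * n) := by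
    calc (|C| + 1) * ((n : ℝ) + 1) ^ d
        ≤ (|C| + 1) * ((Real.exp b)⁻¹ * (|C| + 1)⁻¹ * (Real.exp (b * n) * Real.exp b)) := by gcongr
      _ = Real.exp (b * n) := by field_simp
  refine le_trans ?_ h2
  gcongr
  linarith [le_abs_self C]

theorem tendsto_log_sq_div (c : ℝ) :
    Tendsto (fun n : ℕ => (Real.log n + c) ^ 2 / (n : ℝ)) atTop (𝓝 0) := by
  have h : ∀ k : ℕ, Tendsto (fun n : ℕ => Real.log n ^ k / (n : ℝ)) atTop (𝓝 0) := fun k => by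
    simpa [Function.comp_def] using (Real.tendsto_pow_log_div_mul_add_atTop 1 0 k one_ne_zero).comp
      tendsto_natCast_atTop_atTop
  have h2 := ((h 2).add ((h 1).const_mul (2 * c))).add ((h 0).const_mul (c ^ 2))
  simp only [mul_zero, add_zero] at h2
  refine h2.congr fun n => ?_
  ring

theorem exp_exp_le_of_rate_le {n k : ℕ} {R : ℝ} (hn : 0 < n) (hR : 0 < R)
    (h : R ≤ (1 / n) * Real.log (Real.log k)) :
    Real.exp (n * R) ≤ Real.log k ∧ 0 < k := by
  have hn' : (0 : ℝ) < n := by exact_mod_cast hn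
  have h1 : n * R ≤ Real.log (Real.log k) := by
    rw [one_div, inv_mul_eq_div, le_div_iff₀ hn'] at h
    linarith
  have h2 : 0 < Real.log (Real.log k) := lt_of_lt_of_le (by positivity) h1
  have h3 : 0 < Real.log k := by
    refine lt_of_le_of_ne (Real.log_natCast_nonneg k) fun h0 => ?_
    rw [← h0, Real.log_zero] at h2
    exact h2.ne rfl
  refine ⟨(Real.le_log_iff_exp_le h3).1 h1, Nat.pos_of_ne_zero ?_⟩
  rintro rfl
  simp at h3

/-- The rate condition imposed on the size of a message set. -/
def RateOK (n k : ℕ) (R : ℝ) : Prop :=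
  (0 < R → R ≤ (1 / n) * Real.log (Real.log k)) ∧ (R = 0 → k = 1)

theorem RateOK.pos {n k : ℕ} {R : ℝ} (h : RateOK n k R) (hn : 0 < n) (hR : 0 ≤ R) : 0 < k := by
  rcases hR.eq_or_lt with h0 | h0
  · simp [h.2 h0.symm]
  · exact (exp_exp_le_of_rate_le hn h0 (h.1 h0)).2

theorem isChannel_margY {X Y Z : Type*} [Fintype Y] [Fintype Z] {W : X → Y → Z → ℝ} (hW : IsBC W) : IsChannel (margY W) :=
  ⟨fun x y => Finset.sum_nonneg fun z _ => hW.1 x y z, hW.2⟩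

theorem isChannel_margZ {X Y Z : Type*} [Fintype Y] [Fintype Z] {W : X → Y → Z → ℝ} (hW : IsBC W) : IsChannel (margZ W) :=
  ⟨fun x z => Finset.sum_nonneg fun y _ => hW.1 x y z, fun x => by
    simp only [margZ]; rw [Finset.sum_comm]; exact hW.2 x⟩

variable {X Y : Type*} [Fintype X] [Fintype Y]

theorem eventually_low_information_weight_le [Nonempty X] {W : X → Y → ℝ} (hW : IsChannel W)
    {R δ : ℝ} (hR : 0 < R) (hδ : 0 < δ) :
    ∀ᶠ n : ℕ in atTop, ∀ (k : ℕ) (Q : Fin k → (Fin n → X) → ℝ) (D : Fin k → Finset (Fin n → Y)),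
      (∀ m, IsPMF (Q m)) → IDCodeErr n W Q D (1 / 20) (1 / 20) →
      R ≤ (1 / n) * Real.log (Real.log k) →
      (k : ℝ)⁻¹ * ∑ m, ∑ x with mutInf (empDist x) W < R - δ, Q m x ≤ 2 / 5 := by
  set c := ∑ a, ∑ y, |Real.log (W a y)|
  set d := Fintype.card X
  set L := Real.log d
  have hd : (1 : ℝ) ≤ d := by exact_mod_cast Fintype.card_pos (α := X)
  have hL : 0 ≤ L := Real.log_nonneg hd
  set b := min (3 * δ / 4) R
  have hb : 0 < b := lt_min (by positivity) hR
  have hpoly := eventually_poly_le_exp (401 * L + Real.log 10) (d + 1) hb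
  have htail := (tendsto_log_sq_div c).eventually_le_const
    (show (0 : ℝ) < δ ^ 2 / 320 by positivity)
  filter_upwards [hpoly, htail, eventually_gt_atTop 0] with n hpoly htail hn
  intro k Q D hQ herr hrate
  have hn' : (0 : ℝ) < n := by exact_mod_cast hn
  obtain ⟨hk, hk0⟩ := exp_exp_le_of_rate_le hn hR hrate
  have hk0' : (0 : ℝ) < k := by exact_mod_cast hk0
  set G : ℝ := 400 * ((n : ℝ) + 1) ^ d * Real.exp (n * (R - δ) + n * δ / 4) with hG
  have hG0 : 0 < G := by positivity
  have hbad := card_low_information_messages_le hn hW hQ (ε := 1 / 20) (by norm_num) herr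
    (ρ := R - δ) (t := n * δ / 4) (by positivity) ?_ (M := ⌈G⌉₊) (Nat.ceil_pos.2 hG0) ?_
  rotate_left
  · calc (n : ℝ) * (Real.log n + c) ^ 2 / (n * δ / 4) ^ 2
        = 16 / δ ^ 2 * ((Real.log n + c) ^ 2 / n) := by
          field_simp
          ring
      _ ≤ 16 / δ ^ 2 * (δ ^ 2 / 320) := by gcongr
      _ = 1 / 20 := by field_simp; norm_num
  · have := Nat.le_ceil G
    linarith
  have hmany : 10 * ((d : ℝ) ^ (n * ⌈G⌉₊)) ≤ k := by
    rw [← Real.log_le_log_iff (by positivity) hk0', Real.log_mul (by norm_num) (by positivity),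
      Real.log_pow]
    refine le_trans ?_ hk
    have h1 : Real.exp (n * (R - δ) + n * δ / 4) ≤ Real.exp (n * (R - b)) := by
      rw [Real.exp_le_exp]
      nlinarith [min_le_left (3 * δ / 4) R]
    have h2 : 1 ≤ Real.exp (n * (R - b)) :=
      Real.one_le_exp (mul_nonneg hn'.le (sub_nonneg.2 (min_le_right _ _)))
    have h3 : (1 : ℝ) ≤ ((n : ℝ) + 1) ^ d := one_le_pow₀ (by linarith)
    have h4 : (⌈G⌉₊ : ℝ) ≤ 401 * ((n : ℝ) + 1) ^ d * Real.exp (n * (R - b)) := by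
      have h5 : G ≤ 400 * ((n : ℝ) + 1) ^ d * Real.exp (n * (R - b)) := by rw [hG]; gcongr
      have h6 := (Nat.ceil_lt_add_one hG0.le).le
      nlinarith [mul_le_mul h3 h2 zero_le_one (by positivity)]
    have hlog10 : 0 ≤ Real.log 10 := Real.log_nonneg (by norm_num)
    calc Real.log 10 + ((n * ⌈G⌉₊ : ℕ) : ℝ) * L
        ≤ Real.log 10 * (((n : ℝ) + 1) ^ (d + 1) * Real.exp (n * (R - b)))
          + ((n + 1) * (401 * ((n : ℝ) + 1) ^ d * Real.exp (n * (R - b)))) * L := by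
          push_cast
          have h7 : (1 : ℝ) ≤ ((n : ℝ) + 1) ^ (d + 1) * Real.exp (n * (R - b)) :=
            one_le_mul_of_one_le_of_one_le (one_le_pow₀ (by linarith)) h2
          gcongr
          · exact le_mul_of_one_le_right hlog10 h7
          · linarith
      _ = (401 * L + Real.log 10) * ((n : ℝ) + 1) ^ (d + 1) * Real.exp (n * (R - b)) := by ring
      _ ≤ Real.exp (b * n) * Real.exp (n * (R - b)) := by gcongr
      _ = Real.exp (n * R) := by rw [← Real.exp_add]; ring_nf
  rw [inv_mul_le_iff₀ hk0']
  set S := Finset.univ.filter fun x : Fin n → X => mutInf (empDist x) W < R - δ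
  have hle : ∀ m, ∑ x ∈ S, Q m x
      ≤ 1 / 4 + if 2 * (1 / 20) + 3 * (1 / 20) < ∑ x ∈ S, Q m x then (1 : ℝ) else 0 := fun m => by
    have hS1 : ∑ x ∈ S, Q m x ≤ 1 := (hQ m).2 ▸ Finset.sum_le_univ_sum_of_nonneg (hQ m).1
    split_ifs with h
    · linarith
    · linarith
  refine (Finset.sum_le_sum fun m _ => hle m).trans ?_
  rw [Finset.sum_add_distrib, Finset.sum_boole]
  simp only [Finset.sum_const, Finset.card_univ, Fintype.card_fin, nsmul_eq_mul]
  have hbad' := (Nat.cast_le (α := ℝ)).2 hbad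
  push_cast at hbad'
  linarith

theorem eventually_low_information_weight_le_of_rateOK [Nonempty X] {W : X → Y → ℝ}
    (hW : IsChannel W) {R δ : ℝ} (hR : 0 ≤ R) (hδ : 0 < δ) :
    ∀ᶠ n : ℕ in atTop, ∀ (k : ℕ) (Q : Fin k → (Fin n → X) → ℝ) (D : Fin k → Finset (Fin n → Y)),
      (∀ m, IsPMF (Q m)) → IDCodeErr n W Q D (1 / 20) (1 / 20) → RateOK n k R →
      (k : ℝ)⁻¹ * ∑ m, ∑ x with mutInf (empDist x) W < R - δ, Q m x ≤ 2 / 5 := by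
  rcases hR.eq_or_lt with h0 | h0
  · filter_upwards [eventually_gt_atTop 0] with n hn k Q D _ _ _
    have : (Finset.univ.filter fun x : Fin n → X => mutInf (empDist x) W < R - δ) = ∅ :=
      Finset.filter_eq_empty_iff.2 fun x _ => not_lt.2
        (by linarith [mutInf_nonneg (isPMF_empDist hn x) hW])
    rw [this]
    norm_num
  · filter_upwards [eventually_low_information_weight_le hW h0 hδ] with n h k Q D hQ herr hk
    exact h k Q D hQ herr (hk.1 h0)

theorem isPMF_average {U : Type*} [Fintype U] {k : ℕ} (hk : 0 < k) {Q : Fin k → U → ℝ}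
    (hQ : ∀ m, IsPMF (Q m)) : IsPMF fun x => (k : ℝ)⁻¹ * ∑ m, Q m x := by
  refine ⟨fun x => mul_nonneg (by positivity) (Finset.sum_nonneg fun m _ => (hQ m).1 x), ?_⟩
  rw [← Finset.mul_sum, Finset.sum_comm]
  simp only [(hQ _).2, Finset.sum_const, Finset.card_univ, Fintype.card_fin, nsmul_eq_mul,
    mul_one]
  exact inv_mul_cancel₀ (by positivity)

variable {Z : Type*} [Fintype Z]

theorem BCAchievable.exists_isPMF [Nonempty X] {W : X → Y → Z → ℝ} (hW : IsBC W) {R : ℝ × ℝ}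
    (h : BCAchievable W R) {δ : ℝ} (hδ : 0 < δ) :
    ∃ P : X → ℝ, IsPMF P ∧ R.1 - δ ≤ mutInf P (margY W) ∧ R.2 - δ ≤ mutInf P (margZ W) := by
  obtain ⟨h1, h2, h⟩ := h
  obtain ⟨n₀, hn₀⟩ := h (1 / 20) (1 / 20) (1 / 20) (1 / 20) (by norm_num) (by norm_num)
    (by norm_num) (by norm_num)
  obtain ⟨n, hY, hZ, hn, hnn⟩ :=
    ((eventually_low_information_weight_le_of_rateOK (isChannel_margY hW) h1 hδ).and
      ((eventually_low_information_weight_le_of_rateOK (isChannel_margZ hW) h2 hδ).and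
        ((eventually_gt_atTop 0).and (eventually_ge_atTop n₀)))).exists
  obtain ⟨kY, kZ, Q, DY, DZ, ⟨hQ, hcY, hcZ⟩, hrY, hrZ⟩ := hn₀ n hnn
  have hkY : 0 < kY := RateOK.pos hrY hn h1
  have hkZ : 0 < kZ := RateOK.pos hrZ hn h2
  have hQY := fun my => isPMF_average hkZ (hQ my)
  have hQZ := fun mz => isPMF_average hkY fun my => hQ my mz
  have hY' := hY kY _ DY hQY hcY hrY
  have hZ' := hZ kZ _ DZ hQZ hcZ hrZ
  set q : (Fin n → X) → ℝ := fun x => (kY : ℝ)⁻¹ * ∑ my, (kZ : ℝ)⁻¹ * ∑ mz, Q my mz x with hq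
  have hqP : IsPMF q := isPMF_average hkY hQY
  set SY := Finset.univ.filter fun x : Fin n → X => mutInf (empDist x) (margY W) < R.1 - δ
  set SZ := Finset.univ.filter fun x : Fin n → X => mutInf (empDist x) (margZ W) < R.2 - δ
  have hqY : ∑ x ∈ SY, q x ≤ 2 / 5 := by
    rw [Finset.sum_comm, Finset.mul_sum] at hY'
    exact hY'
  have hqZ : ∑ x ∈ SZ, q x ≤ 2 / 5 := by
    rw [Finset.sum_comm, Finset.mul_sum] at hZ'
    refine le_trans (le_of_eq (Finset.sum_congr rfl fun x _ => ?_)) hZ'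
    simp only [hq, Finset.mul_sum]
    rw [Finset.sum_comm]
    exact Finset.sum_congr rfl fun _ _ => Finset.sum_congr rfl fun _ _ => by ring
  have hex : ∃ x, x ∉ SY ∪ SZ := by
    by_contra! hall
    have huniv : SY ∪ SZ = Finset.univ := Finset.eq_univ_iff_forall.2 hall
    have := Finset.sum_union_inter (f := q) (s₁ := SY) (s₂ := SZ)
    rw [huniv, hqP.2] at this
    linarith [Finset.sum_nonneg fun x (_ : x ∈ SY ∩ SZ) => hqP.1 x]
  obtain ⟨x, hx⟩ := hex
  simp only [Finset.mem_union, not_or, SY, SZ, Finset.mem_filter, Finset.mem_univ, true_and,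
    not_lt] at hx
  exact ⟨empDist x, isPMF_empDist hn x, hx⟩

end Converse

section RandomCoding

theorem sum_filter_exists_le {U κ : Type*} [Fintype U] [Fintype κ] {p : U → ℝ}
    (hp : ∀ u, 0 ≤ p u) (C : κ → U → Prop) :
    ∑ u with ∃ k, C k u, p u ≤ ∑ k, ∑ u with C k u, p u := by
  simp only [Finset.sum_filter]
  rw [Finset.sum_comm]
  refine Finset.sum_le_sum fun u _ => ?_
  have hnn : ∀ k, 0 ≤ if C k u then p u else 0 := fun k => by
    split_ifs; exacts [hp u, le_rfl]
  split_ifs with h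
  · obtain ⟨k, hk⟩ := h
    refine le_trans (le_of_eq ?_) (Finset.single_le_sum (fun k _ => hnn k) (Finset.mem_univ k))
    rw [if_pos hk]
  · exact Finset.sum_nonneg fun k _ => hnn k

theorem IsPMF.exists_not_of_sum_lt_one {U κ : Type*} [Fintype U] [Fintype κ] {p : U → ℝ}
    (hp : IsPMF p) (C : κ → U → Prop) (h : ∑ k, ∑ u with C k u, p u < 1) : ∃ u, ∀ k, ¬ C k u := by
  by_contra! hC
  have h1 := sum_filter_exists_le hp.1 C
  rw [Finset.filter_true_of_mem fun u _ => hC u, hp.2] at h1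
  exact lt_irrefl _ (h1.trans_lt h)

theorem sum_biUnion_le {I V : Type*} [DecidableEq V] (G : I → Finset V) {q : V → ℝ}
    (hq : ∀ y, 0 ≤ q y) (s : Finset I) :
    ∑ y ∈ s.biUnion G, q y ≤ ∑ v ∈ s, ∑ y ∈ G v, q y := by
  induction s using Finset.induction_on with
  | empty => simp
  | insert a s ha ih =>
    rw [Finset.biUnion_insert, Finset.sum_insert ha]
    have := Finset.sum_union_inter (f := q) (s₁ := G a) (s₂ := s.biUnion G)
    linarith [Finset.sum_nonneg fun y (_ : y ∈ G a ∩ s.biUnion G) => hq y]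

theorem IsChannel.sum_le_one {U V : Type*} [Fintype V] {w : U → V → ℝ} (hw : IsChannel w) (u : U) (s : Finset V) :
    ∑ y ∈ s, w u y ≤ 1 :=
  hw.2 u ▸ Finset.sum_le_univ_sum_of_nonneg (hw.1 u)

theorem IsChannel.sum_nonneg {U V : Type*} [Fintype V] {w : U → V → ℝ} (hw : IsChannel w) (u : U) (s : Finset V) :
    0 ≤ ∑ y ∈ s, w u y :=
  Finset.sum_nonneg fun y _ => hw.1 u y

variable {ι U V : Type*} [Fintype ι] [DecidableEq ι] [Fintype U] [Fintype V] [DecidableEq V]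

/-- To bound the probability of an event, condition on the coordinates in `s`. -/
theorem sum_pi_le_of_conditional {p : U → ℝ} (hp : IsPMF p) (s : Finset ι)
    (C : (ι → U) → Prop) {c : ℝ}
    (h : ∀ a : {i // i ∈ s} → U, ∑ b : {i // i ∉ s} → U with
      C ((Equiv.piEquivPiSubtypeProd (· ∈ s) fun _ => U).symm (a, b)), ∏ i, p (b i) ≤ c) :
    ∑ x with C x, ∏ i, p (x i) ≤ c := by
  set e := Equiv.piEquivPiSubtypeProd (· ∈ s) fun _ : ι => U
  have hprod : ∀ (a : {i // i ∈ s} → U) (b : {i // i ∉ s} → U),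
      ∏ i, p (e.symm (a, b) i) = (∏ i, p (a i)) * ∏ i, p (b i) := fun a b => by
    rw [← Fintype.prod_subtype_mul_prod_subtype (· ∈ s)]
    congr 1
    · exact Finset.prod_congr (by ext; simp) fun i _ => by
        simp [e, Equiv.piEquivPiSubtypeProd, i.2]
    · exact Finset.prod_congr (by ext; simp) fun i _ => by
        simp [e, Equiv.piEquivPiSubtypeProd, i.2]
  rw [Finset.sum_filter, ← Equiv.sum_comp e.symm, Fintype.sum_prod_type]
  have h1 : ∀ a : {i // i ∈ s} → U,
      ∑ b : {i // i ∉ s} → U, (if C (e.symm (a, b)) then ∏ i, p (e.symm (a, b) i) else 0)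
        ≤ (∏ i, p (a i)) * c := fun a => by
    refine le_trans (le_of_eq ?_) (mul_le_mul_of_nonneg_left (h a)
      (pi_prod_nonneg (p := fun _ => p) (fun _ => hp) a))
    rw [Finset.sum_filter, Finset.mul_sum]
    refine Finset.sum_congr rfl fun b _ => ?_
    rw [hprod, mul_ite, mul_zero]
  refine (Finset.sum_le_sum fun a _ => h1 a).trans ?_
  rw [← Finset.sum_mul, sum_pi_prod_eq_one (p := fun _ => p) fun _ => hp, one_mul]

/-- The decoding set obtained by merging the decoding sets of the pool words indexed by `s`. -/
def decSet (G : U → Finset V) (x : ι → U) (s : Finset ι) : Finset V := s.biUnion fun v => G (x v)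

/-- The pool `x` turns the index sets `S m` into an identification code of small error. -/
def IDGood {I : Type*} (w : U → V → ℝ) (G : U → Finset V) (S : I → Finset ι) (ε M : ℝ)
    (x : ι → U) : Prop :=
  (∀ m, ∑ v ∈ S m, (1 - ∑ y ∈ G (x v), w (x v) y) ≤ ε * M) ∧
  ∀ m m', m ≠ m' → ∑ v ∈ S m, ∑ y ∈ decSet G x (S m'), w (x v) y ≤ 2 * ε * M

theorem false_id_tail_le {p : U → ℝ} (hp : IsPMF p) {w : U → V → ℝ} (hw : IsChannel w)
    {G : U → Finset V} {ε τ M : ℝ} (hε : 0 < ε) (hτ : Real.exp (2 / ε) * τ ≤ 1)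
    (hG : ∀ u, M * ∑ y ∈ G u, outDist p w y ≤ τ)
    {s s' : Finset ι} (hs : (s.card : ℝ) = M) (hs' : (s'.card : ℝ) = M) (hM : 0 < M) :
    ∑ x : ι → U with ε * M ≤ ∑ v ∈ s \ s', ∑ y ∈ decSet G x s', w (x v) y, ∏ i, p (x i)
      ≤ Real.exp (-M) := by
  refine sum_pi_le_of_conditional hp s' _ fun a => ?_
  set D := Finset.univ.biUnion fun v : {i // i ∈ s'} => G (a v) with hD
  have hmean : ∑ u, p u * ∑ y ∈ D, w u y ≤ τ := by
    have h1 : ∑ u, p u * ∑ y ∈ D, w u y = ∑ y ∈ D, outDist p w y := by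
      simp only [outDist, Finset.mul_sum]
      exact Finset.sum_comm
    rw [h1]
    refine (sum_biUnion_le _ (outDist_nonneg hp.1 hw.1) _).trans ?_
    have h2 : ∀ u, ∑ y ∈ G u, outDist p w y ≤ τ / M := fun u => by
      rw [le_div_iff₀ hM, mul_comm]
      exact hG u
    refine (Finset.sum_le_sum fun v _ => h2 (a v)).trans ?_
    rw [Finset.sum_const, Finset.card_univ, Fintype.card_coe, nsmul_eq_mul, hs']
    field_simp
    exact le_rfl
  have hconc := concentration_pi (ι := {i // i ∉ s'}) (p := fun _ => p) (fun _ => hp)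
    (f := fun _ u => ∑ y ∈ D, w u y) (fun _ u => hw.sum_nonneg u D)
    (fun _ u => hw.sum_le_one u D) (M := M) hε hτ ((s \ s').subtype (· ∉ s')) ?_ fun _ => hmean
  · refine le_trans (le_of_eq (Finset.sum_congr ?_ fun _ _ => rfl)) hconc
    refine Finset.filter_congr fun b _ => ?_
    set x := (Equiv.piEquivPiSubtypeProd (· ∈ s') fun _ => U).symm (a, b) with hx
    have hxa : ∀ i : {i // i ∈ s'}, x i = a i := fun i => by
      simp [hx, Equiv.piEquivPiSubtypeProd, i.2]
    have hxb : ∀ i : {i // i ∉ s'}, x i = b i := fun i => by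
      simp [hx, Equiv.piEquivPiSubtypeProd, i.2]
    have hDx : decSet G x s' = D := by
      ext y
      simp only [decSet, hD, Finset.mem_biUnion, Finset.mem_univ, true_and]
      constructor
      · rintro ⟨v, hv, hy⟩
        exact ⟨⟨v, hv⟩, by rwa [← hxa ⟨v, hv⟩]⟩
      · rintro ⟨v, hy⟩
        exact ⟨v, v.2, by rwa [hxa v]⟩
    have hsum : ∑ v ∈ s \ s', ∑ y ∈ decSet G x s', w (x v) y
        = ∑ i ∈ (s \ s').subtype (· ∉ s'), ∑ y ∈ D, w (b i) y := by
      rw [hDx, ← Finset.sum_subtype_of_mem (fun v => ∑ y ∈ D, w (x v) y)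
        fun v hv => (Finset.mem_sdiff.1 hv).2]
      exact Finset.sum_congr rfl fun v _ => by rw [hxb v]
    rw [hsum]
  · rw [← hs]
    exact_mod_cast (Finset.card_subtype _ _).le.trans ((Finset.card_filter_le _ _).trans
      (Finset.card_le_card Finset.sdiff_subset))

theorem not_IDGood_weight_le {I : Type*} [Fintype I] {p : U → ℝ} (hp : IsPMF p)
    {w : U → V → ℝ} (hw : IsChannel w) {G : U → Finset V} {ε τ M : ℝ} (hε : 0 < ε)
    (hM : 0 < M) (hτ : Real.exp (2 / ε) * τ ≤ 1)
    (hmiss : ∑ u, p u * (1 - ∑ y ∈ G u, w u y) ≤ τ)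
    (hG : ∀ u, M * ∑ y ∈ G u, outDist p w y ≤ τ)
    {S : I → Finset ι} (hS : ∀ m, ((S m).card : ℝ) = M)
    (hSS : ∀ m m', m ≠ m' → ((S m ∩ S m').card : ℝ) ≤ ε * M) :
    ∑ x with ¬ IDGood w G S ε M x, ∏ i, p (x i)
      ≤ (Fintype.card I + (Fintype.card I : ℝ) ^ 2) * Real.exp (-M) := by
  have hP0 : ∀ x : ι → U, 0 ≤ ∏ i, p (x i) := pi_prod_nonneg (p := fun _ => p) fun _ => hp
  set C : I ⊕ (I × I) → (ι → U) → Prop := Sum.elim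
    (fun m x => ε * M ≤ ∑ v ∈ S m, (1 - ∑ y ∈ G (x v), w (x v) y))
    (fun m x => ε * M ≤ ∑ v ∈ S m.1 \ S m.2, ∑ y ∈ decSet G x (S m.2), w (x v) y) with hC
  have hsub : ∀ x, ¬ IDGood w G S ε M x → ∃ k, C k x := fun x hx => by
    by_contra! hno
    refine hx ⟨fun m => (not_le.1 (hno (Sum.inl m))).le, fun m m' hmm => ?_⟩
    have h1 := (not_le.1 (hno (Sum.inr (m, m')))).le
    have h2 : ∑ v ∈ S m ∩ S m', ∑ y ∈ decSet G x (S m'), w (x v) y ≤ ε * M :=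
      (Finset.sum_le_sum fun v _ => hw.sum_le_one (x v) _).trans (by simpa using hSS m m' hmm)
    rw [← Finset.sum_inter_add_sum_sdiff (S m) (S m')]
    dsimp only at h1
    linarith
  calc ∑ x with ¬ IDGood w G S ε M x, ∏ i, p (x i)
      ≤ ∑ x with ∃ k, C k x, ∏ i, p (x i) :=
        Finset.sum_le_sum_of_subset_of_nonneg
          (Finset.monotone_filter_right _ fun x _ hx => hsub x hx) fun x _ _ => hP0 x
    _ ≤ ∑ k, ∑ x with C k x, ∏ i, p (x i) := sum_filter_exists_le hP0 C
    _ ≤ ∑ _k : I ⊕ (I × I), Real.exp (-M) := by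
        refine Finset.sum_le_sum fun k _ => ?_
        rcases k with m | ⟨m, m'⟩
        · exact concentration_pi (p := fun _ => p) (fun _ => hp)
            (f := fun _ u => 1 - ∑ y ∈ G u, w u y)
            (fun _ u => sub_nonneg.2 (hw.sum_le_one u _))
            (fun _ u => sub_le_self _ (hw.sum_nonneg u _)) hε hτ (S m) (hS m).le fun _ => hmiss
        · exact false_id_tail_le hp hw hε hτ hG (hS m) (hS m') hM
    _ = (Fintype.card I + (Fintype.card I : ℝ) ^ 2) * Real.exp (-M) := by
        simp [sq]

/-- Gilbert–Varshamov type bound: many functions with small pairwise agreement, robustly with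
respect to adding constants. -/
theorem exists_separated_family {K : Type*} [Fintype K] [DecidableEq K] {L : ℕ} [NeZero L]
    {ε : ℝ} (hε : 0 < ε) (hL : Real.exp (2 / ε) ≤ L) (N : ℕ)
    (hN : N * L * Real.exp (-Fintype.card K) < 1) :
    ∃ T : Fin N → K → ZMod L, ∀ i j, i ≠ j → ∀ c,
      ((Finset.univ.filter fun κ => T i κ = T j κ + c).card : ℝ) ≤ ε * Fintype.card K := by
  have hL0 : (0 : ℝ) < L := by exact_mod_cast NeZero.pos L
  induction N with
  | zero => exact ⟨fun i => i.elim0, fun i => i.elim0⟩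
  | succ N ih =>
    have hN' : N * L * Real.exp (-Fintype.card K) < 1 := by
      refine lt_of_le_of_lt ?_ hN
      gcongr
      simp
    obtain ⟨T, hT⟩ := ih hN'
    have hu : IsPMF fun _ : ZMod L => (L : ℝ)⁻¹ :=
      ⟨fun _ => by positivity, by simp [ZMod.card, hL0.ne']⟩
    have hP : IsPMF fun t : K → ZMod L => ∏ _i : K, (L : ℝ)⁻¹ :=
      isPMF_pi (ι := K) (U := ZMod L) (p := fun _ _ => (L : ℝ)⁻¹) fun _ => hu
    have hbad : ∀ k : Fin N × ZMod L, ∑ t : K → ZMod L with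
        ε * Fintype.card K ≤ ∑ κ ∈ Finset.univ, (if t κ = T k.1 κ + k.2 then (1 : ℝ) else 0),
        ∏ _i : K, (L : ℝ)⁻¹ ≤ Real.exp (-Fintype.card K) := fun k =>
      concentration_pi (ι := K) (U := ZMod L) (p := fun _ _ => (L : ℝ)⁻¹) (fun _ => hu)
        (f := fun κ u => if u = T k.1 κ + k.2 then (1 : ℝ) else 0)
        (fun _ _ => by split_ifs <;> norm_num) (fun _ _ => by split_ifs <;> norm_num)
        (τ := (L : ℝ)⁻¹) hε (by rw [← div_eq_mul_inv]; exact div_le_one_of_le₀ hL hL0.le)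
        Finset.univ (by simp) fun κ => by simp
    obtain ⟨t, ht⟩ := hP.exists_not_of_sum_lt_one (fun (k : Fin N × ZMod L) (t : K → ZMod L) =>
        ε * Fintype.card K ≤ ∑ κ ∈ Finset.univ, (if t κ = T k.1 κ + k.2 then (1 : ℝ) else 0)) <| by
      refine (Finset.sum_le_sum fun k _ => hbad k).trans_lt ?_
      simpa [ZMod.card] using hN'
    push Not at ht
    have ht' : ∀ j c, ((Finset.univ.filter fun κ => t κ = T j κ + c).card : ℝ)
        ≤ ε * Fintype.card K := fun j c => by
      simpa using (ht (j, c)).le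
    refine ⟨Fin.cons t T, fun i j hij c => ?_⟩
    refine Fin.cases (fun hij => ?_) (fun i hij => ?_) i hij
    · obtain ⟨j, rfl⟩ := Fin.exists_succ_eq.2 hij.symm
      simpa using ht' j c
    · refine Fin.cases (fun _ => ?_) (fun j hij => ?_) j hij
      · have : ∀ κ, T i κ = t κ + c ↔ t κ = T i κ + -c := fun κ => by
          constructor <;> intro h <;> rw [h] <;> ring
        simpa [this] using ht' i (-c)
      · simpa using hT i j (fun h => hij (by rw [h])) c

/-- Functions with small pairwise agreement whose values at every point are equidistributed over
the family. -/
theorem exists_balanced_family {K : Type*} [Fintype K] [DecidableEq K] {L : ℕ} [NeZero L]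
    {ε : ℝ} (hε : 0 < ε) (hL : Real.exp (2 / ε) ≤ L) (N : ℕ)
    (hN : N * L * Real.exp (-Fintype.card K) < 1) :
    ∃ T : Fin N × ZMod L → K → ZMod L,
      (∀ m m', m ≠ m' →
        ((Finset.univ.filter fun κ => T m κ = T m' κ).card : ℝ) ≤ ε * Fintype.card K) ∧
      ∀ κ (g : ZMod L → ℝ), ∑ m, g (T m κ) = N * ∑ l, g l := by
  obtain ⟨T, hT⟩ := exists_separated_family (K := K) hε hL N hN
  refine ⟨fun m κ => T m.1 κ + m.2, fun m m' hmm => ?_, fun κ g => ?_⟩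
  · rcases eq_or_ne m.1 m'.1 with h | h
    · have h2 : m.2 ≠ m'.2 := fun h2 => hmm (Prod.ext h h2)
      simp only [h, add_right_inj, h2, Finset.filter_false, Finset.card_empty, Nat.cast_zero]
      positivity
    · have : ∀ κ, T m.1 κ + m.2 = T m'.1 κ + m'.2 ↔ T m.1 κ = T m'.1 κ + (m'.2 - m.2) :=
        fun κ => by
          rw [← eq_sub_iff_add_eq, add_sub_assoc]
      simp only [this]
      exact hT _ _ h _
  · rw [Fintype.sum_prod_type]
    have : ∀ i, ∑ c, g (T i κ + c) = ∑ l, g l := fun i =>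
      Equiv.sum_comp (Equiv.addLeft (T i κ)) g
    simp [this]

end RandomCoding

section Typicality

theorem outDist_Wn {X Y : Type*} [Fintype X] (P : X → ℝ) (W : X → Y → ℝ) {n : ℕ} (y : Fin n → Y) :
    outDist (fun x : Fin n → X => ∏ i, P (x i)) (Wn W n) y = ∏ i, outDist P W (y i) := by
  have h := sum_pi_prod (ι := Fin n) fun i x => P x * W x (y i)
  simp only [Finset.prod_mul_distrib] at h
  exact h

variable {X Y : Type*} [Fintype X] [Fintype Y]

/-- The outputs `y` whose likelihood under the input `x` exceeds that under the output
distribution by at least the factor `exp (n * ρ)`. -/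
def typSet (P : X → ℝ) (W : X → Y → ℝ) (n : ℕ) (ρ : ℝ) (x : Fin n → X) : Finset (Fin n → Y) :=
  Finset.univ.filter fun y => Real.exp (n * ρ) * ∏ i, outDist P W (y i) ≤ Wn W n x y

theorem sum_typSet_outDist_le {P : X → ℝ} {W : X → Y → ℝ} (hW : IsChannel W) {n : ℕ} (ρ : ℝ)
    (x : Fin n → X) :
    ∑ y ∈ typSet P W n ρ x, outDist (fun x : Fin n → X => ∏ i, P (x i)) (Wn W n) y
      ≤ Real.exp (-(n * ρ)) := by
  have h : ∀ y ∈ typSet P W n ρ x, outDist (fun x : Fin n → X => ∏ i, P (x i)) (Wn W n) y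
      ≤ Real.exp (-(n * ρ)) * Wn W n x y := fun y hy => by
    rw [outDist_Wn, Real.exp_neg, inv_mul_eq_div, le_div_iff₀ (Real.exp_pos _), mul_comm]
    exact (Finset.mem_filter.1 hy).2
  refine (Finset.sum_le_sum h).trans ?_
  rw [← Finset.mul_sum]
  exact mul_le_of_le_one_right (Real.exp_pos _).le ((isChannel_Wn hW).sum_le_one x _)

theorem isPMF_joint {P : X → ℝ} (hP : IsPMF P) {W : X → Y → ℝ} (hW : IsChannel W) :
    IsPMF fun u : X × Y => P u.1 * W u.1 u.2 := by
  refine ⟨fun u => mul_nonneg (hP.1 _) (hW.1 _ _), ?_⟩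
  simp [Fintype.sum_prod_type, ← Finset.mul_sum, hW.2, hP.2]

theorem lt_of_not_mem_typSet {P : X → ℝ} (hP : IsPMF P) {W : X → Y → ℝ} (hW : IsChannel W)
    {n : ℕ} {ρ : ℝ} {x : Fin n → X} {y : Fin n → Y} (hy : y ∉ typSet P W n ρ x)
    (h0 : ∏ i, P (x i) * W (x i) (y i) ≠ 0) :
    ∑ i, infoDens P W (x i) (y i) < n * ρ := by
  have hpos : ∀ i, 0 < P (x i) * W (x i) (y i) := fun i =>
    (mul_nonneg (hP.1 _) (hW.1 _ _)).lt_of_ne' (Finset.prod_ne_zero_iff.1 h0 i (Finset.mem_univ i))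
  have hW0 : ∀ i, 0 < W (x i) (y i) := fun i => pos_of_mul_pos_right (hpos i) (hP.1 _)
  have hout : ∀ i, 0 < outDist P W (y i) := fun i =>
    (hpos i).trans_le (mul_le_outDist hP.1 hW.1 _ _)
  have hlt : Wn W n x y < Real.exp (n * ρ) * ∏ i, outDist P W (y i) := by
    simpa [typSet] using hy
  have hprod : 0 < ∏ i, outDist P W (y i) := Finset.prod_pos fun i _ => hout i
  unfold infoDens
  rw [← Real.log_prod fun i _ => (div_pos (hW0 i) (hout i)).ne', Finset.prod_div_distrib,
    Real.log_lt_iff_lt_exp (div_pos (Finset.prod_pos fun i _ => hW0 i) hprod), div_lt_iff₀ hprod]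
  exact hlt

theorem typSet_miss_le {P : X → ℝ} (hP : IsPMF P) {W : X → Y → ℝ} (hW : IsChannel W)
    {n : ℕ} (hn : 0 < n) {ρ : ℝ} (hρ : ρ < mutInf P W) :
    ∑ x : Fin n → X, (∏ i, P (x i)) * (1 - ∑ y ∈ typSet P W n ρ x, Wn W n x y)
      ≤ (∑ u : X × Y, P u.1 * W u.1 u.2 * infoDens P W u.1 u.2 ^ 2)
        / (n * (mutInf P W - ρ) ^ 2) := by
  set B := ∑ u : X × Y, P u.1 * W u.1 u.2 * infoDens P W u.1 u.2 ^ 2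
  have hn' : (0 : ℝ) < n := by exact_mod_cast hn
  have hJ := isPMF_joint hP hW
  have hcheb := chebyshev_pi (ι := Fin n) (U := X × Y) (p := fun _ u => P u.1 * W u.1 u.2)
    (fun _ => hJ)
    (fun _ u => infoDens P W u.1 u.2) (B := B) (mul_pos hn' (sub_pos.2 hρ)) fun _ => le_rfl
  have hI : ∑ u : X × Y, P u.1 * W u.1 u.2 * infoDens P W u.1 u.2 = mutInf P W := by
    simp only [mutInf_eq_sum_infoDens, Fintype.sum_prod_type, Finset.mul_sum, mul_assoc]
  simp only [hI, Finset.sum_const, Finset.card_univ, Fintype.card_fin, nsmul_eq_mul] at hcheb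
  have hB : (n : ℝ) * B / (n * (mutInf P W - ρ)) ^ 2 = B / (n * (mutInf P W - ρ) ^ 2) := by
    field_simp
  rw [hB] at hcheb
  refine le_trans ?_ hcheb
  rw [Finset.sum_filter, ← Equiv.sum_comp (Equiv.arrowProdEquivProdArrow (Fin n)
    (fun _ => X) fun _ => Y).symm, Fintype.sum_prod_type]
  refine Finset.sum_le_sum fun x _ => ?_
  have h1 : 1 - ∑ y ∈ typSet P W n ρ x, Wn W n x y = ∑ y ∈ (typSet P W n ρ x)ᶜ, Wn W n x y := by
    rw [← (isChannel_Wn hW).2 x, ← Finset.sum_compl_add_sum (typSet P W n ρ x)]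
    ring
  have h2 : (typSet P W n ρ x)ᶜ = Finset.univ.filter fun y => y ∉ typSet P W n ρ x := by
    ext; simp
  rw [h1, h2, Finset.mul_sum, Finset.sum_filter]
  refine Finset.sum_le_sum fun y _ => ?_
  change _ ≤ if n * (mutInf P W - ρ) ≤ |∑ i, infoDens P W (x i) (y i) - n * mutInf P W|
    then ∏ i, P (x i) * W (x i) (y i) else 0
  have h3 : (∏ i, P (x i)) * Wn W n x y = ∏ i, P (x i) * W (x i) (y i) :=
    Finset.prod_mul_distrib.symm
  have hnn : 0 ≤ ∏ i, P (x i) * W (x i) (y i) :=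
    Finset.prod_nonneg fun i _ => mul_nonneg (hP.1 _) (hW.1 _ _)
  rw [h3]
  by_cases hy : y ∈ typSet P W n ρ x
  · rw [if_neg (not_not.2 hy)]
    split_ifs
    exacts [hnn, le_rfl]
  rw [if_pos hy]
  by_cases h0 : ∏ i, P (x i) * W (x i) (y i) = 0
  · simp [h0]
  · have := lt_of_not_mem_typSet hP hW hy h0
    rw [if_pos]
    rw [abs_sub_comm]
    refine le_trans ?_ (le_abs_self _)
    linarith

theorem eventually_typSet_miss_le {P : X → ℝ} (hP : IsPMF P) {W : X → Y → ℝ} (hW : IsChannel W)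
    {ρ : ℝ} (hρ : ρ < mutInf P W) {τ : ℝ} (hτ : 0 < τ) :
    ∀ᶠ n : ℕ in Filter.atTop,
      ∑ x : Fin n → X, (∏ i, P (x i)) * (1 - ∑ y ∈ typSet P W n ρ x, Wn W n x y) ≤ τ := by
  have h0 : 0 < (mutInf P W - ρ) ^ 2 := pow_pos (sub_pos.2 hρ) 2
  have hlim := (tendsto_natCast_atTop_atTop (R := ℝ)).atTop_mul_const h0
  filter_upwards [(hlim.const_div_atTop (∑ u : X × Y, P u.1 * W u.1 u.2 *
    infoDens P W u.1 u.2 ^ 2)).eventually_le_const hτ, Filter.eventually_gt_atTop 0]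
    with n hn hn0
  exact (typSet_miss_le hP hW hn0 hρ).trans hn

end Typicality

section Graphs

variable {K L : Type*} [Fintype K] [DecidableEq K] [DecidableEq L]

/-- The graph of a function as a finite set. -/
def graphSet {K L : Type*} [Fintype K] (f : K → L) : Finset (K × L) :=
  Finset.univ.map ⟨fun κ => (κ, f κ), fun _ _ h => congrArg Prod.fst h⟩

theorem mem_graphSet {K L : Type*} [Fintype K] {f : K → L} {v : K × L} :
    v ∈ graphSet f ↔ f v.1 = v.2 := by
  simp only [graphSet, Finset.mem_map, Finset.mem_univ, true_and]
  exact ⟨by rintro ⟨κ, rfl⟩; rfl, fun h => ⟨v.1, Prod.ext rfl h⟩⟩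

theorem card_graphSet {K L : Type*} [Fintype K] (f : K → L) :
    (graphSet f).card = Fintype.card K := by
  simp [graphSet]

theorem sum_graphSet {K L : Type*} [Fintype K] (f : K → L) (g : K × L → ℝ) :
    ∑ v ∈ graphSet f, g v = ∑ κ, g (κ, f κ) := by
  rw [graphSet, Finset.sum_map]
  rfl

theorem card_graphSet_inter_le (f g : K → L) :
    (graphSet f ∩ graphSet g).card ≤ (Finset.univ.filter fun κ => f κ = g κ).card := by
  refine Finset.card_le_card_of_injOn Prod.fst (fun v hv => ?_) fun v hv v' hv' h => ?_
  · obtain ⟨h1, h2⟩ := Finset.mem_inter.1 hv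
    rw [mem_graphSet] at h1 h2
    simp [h1, h2]
  · have h1 := mem_graphSet.1 (Finset.mem_inter.1 hv).1
    have h2 := mem_graphSet.1 (Finset.mem_inter.1 hv').1
    exact Prod.ext h (by rw [← h1, ← h2, h])

theorem card_graphSet_product_inter_le {R : Type*} [Fintype R] [DecidableEq R] (f g : K → L) :
    ((graphSet f ×ˢ (Finset.univ : Finset R)) ∩ (graphSet g ×ˢ Finset.univ)).card
      ≤ (Finset.univ.filter fun κ => f κ = g κ).card * Fintype.card R := by
  rw [← Finset.inter_product, Finset.card_product, Finset.card_univ]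
  exact Nat.mul_le_mul_right _ (card_graphSet_inter_le f g)

end Graphs

section Codes

theorem IDCodeErr.mono {X Y M : Type*} [Fintype X] [Fintype Y] {n : ℕ} {W : X → Y → ℝ}
    {Q : M → (Fin n → X) → ℝ} {D : M → Finset (Fin n → Y)} {l1 l2 l1' l2' : ℝ}
    (h : IDCodeErr n W Q D l1 l2) (h1 : l1 ≤ l1') (h2 : l2 ≤ l2') :
    IDCodeErr n W Q D l1' l2' :=
  ⟨fun m => (h.1 m).trans h1, fun m m' hm => (h.2 m m' hm).trans h2⟩

theorem idCodeErr_univ {X Y M : Type*} [Fintype X] [Fintype Y] [Subsingleton M] {n : ℕ}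
    (W : X → Y → ℝ) (Q : M → (Fin n → X) → ℝ) {l1 l2 : ℝ} (h1 : 0 ≤ l1) :
    IDCodeErr n W Q (fun _ => Finset.univ) l1 l2 :=
  ⟨fun m => by simpa using h1, fun m m' hm => (hm (Subsingleton.elim _ _)).elim⟩

theorem IDGood.idCodeErr {ι X Y M : Type*} [Fintype X] [Fintype Y]
    {n : ℕ} {W : X → Y → ℝ} (hW : IsChannel W) {G : (Fin n → X) → Finset (Fin n → Y)}
    {S : M → Finset ι} {ε m : ℝ} {x : ι → Fin n → X} (hx : IDGood (Wn W n) G S ε m x)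
    (hm : 0 < m) {Q : M → (Fin n → X) → ℝ}
    (hQ : ∀ i (g : (Fin n → X) → ℝ), ∑ u, Q i u * g u = m⁻¹ * ∑ v ∈ S i, g (x v)) :
    IDCodeErr n W Q (fun i => decSet G x (S i)) ε (2 * ε) := by
  refine ⟨fun i => ?_, fun i j hij => ?_⟩
  · rw [hQ, inv_mul_le_iff₀ hm, mul_comm m]
    refine le_trans (Finset.sum_le_sum fun v hv => ?_) (hx.1 i)
    have h1 := (isChannel_Wn (n := n) hW).2 (x v)
    rw [← Finset.sum_compl_add_sum (decSet G x (S i))] at h1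
    have h2 : ∑ y ∈ G (x v), Wn W n (x v) y ≤ ∑ y ∈ decSet G x (S i), Wn W n (x v) y :=
      Finset.sum_le_sum_of_subset_of_nonneg
        (Finset.subset_biUnion_of_mem (fun v => G (x v)) hv)
        fun y _ _ => (isChannel_Wn hW).1 _ _
    linarith
  · rw [hQ, inv_mul_le_iff₀ hm, mul_comm m]
    exact hx.2 i j hij

/-- Broadcast identification codes may be indexed by arbitrary finite types. -/
theorem exists_isBCIDCode_fin {X Y Z IY IZ : Type*} [Fintype X] [Fintype Y] [Fintype Z]
    [Fintype IY] [Fintype IZ] {n : ℕ} {W : X → Y → Z → ℝ} {Q : IY → IZ → (Fin n → X) → ℝ}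
    {DY : IY → Finset (Fin n → Y)} {DZ : IZ → Finset (Fin n → Z)} {l1Y l2Y l1Z l2Z : ℝ}
    (hQ : ∀ i j, IsPMF (Q i j))
    (hY : IDCodeErr n (margY W) (fun i x => (Fintype.card IZ : ℝ)⁻¹ * ∑ j, Q i j x) DY l1Y l2Y)
    (hZ : IDCodeErr n (margZ W) (fun j x => (Fintype.card IY : ℝ)⁻¹ * ∑ i, Q i j x) DZ l1Z l2Z)
    {kY kZ : ℕ} (hkY : Fintype.card IY = kY) (hkZ : Fintype.card IZ = kZ) :
    ∃ (Q : Fin kY → Fin kZ → (Fin n → X) → ℝ) (DY : Fin kY → Finset (Fin n → Y))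
      (DZ : Fin kZ → Finset (Fin n → Z)), IsBCIDCode n kY kZ W Q DY DZ l1Y l2Y l1Z l2Z := by
  subst hkY hkZ
  set e := (Fintype.equivFin IY).symm
  set f := (Fintype.equivFin IZ).symm
  refine ⟨fun i j => Q (e i) (f j), fun i => DY (e i), fun j => DZ (f j),
    fun i j => hQ _ _, ?_, ?_⟩
  · simp only [fun i x => Equiv.sum_comp f fun j => Q i j x]
    exact ⟨fun m => hY.1 _, fun m m' hm => hY.2 _ _ (e.injective.ne hm)⟩
  · simp only [fun j x => Equiv.sum_comp e fun i => Q i j x]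
    exact ⟨fun m => hZ.1 _, fun m m' hm => hZ.2 _ _ (f.injective.ne hm)⟩

variable {U A B C IY IZ : Type*} [DecidableEq U] [Fintype A]

/-- The input distribution selecting a common coordinate uniformly at random. -/
def pairInput (x : (A × B) × C → U) (T : IY → A × B → C) (S : IZ → A → B) (i : IY) (j : IZ)
    (u : U) : ℝ :=
  (Fintype.card A : ℝ)⁻¹ * ∑ a, if x ((a, S j a), T i (a, S j a)) = u then 1 else 0

theorem sum_pairInput [Fintype U] (x : (A × B) × C → U) (T : IY → A × B → C) (S : IZ → A → B) (i : IY)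
    (j : IZ) (g : U → ℝ) :
    ∑ u, pairInput x T S i j u * g u
      = (Fintype.card A : ℝ)⁻¹ * ∑ a, g (x ((a, S j a), T i (a, S j a))) := by
  simp only [pairInput, mul_assoc, ← Finset.mul_sum, Finset.sum_mul]
  rw [Finset.sum_comm]
  simp

theorem isPMF_pairInput [Fintype U] [Nonempty A] (x : (A × B) × C → U) (T : IY → A × B → C) (S : IZ → A → B)
    (i : IY) (j : IZ) : IsPMF (pairInput x T S i j) := by
  refine ⟨fun u => ?_, ?_⟩
  · exact mul_nonneg (by positivity) (Finset.sum_nonneg fun a _ => by split_ifs <;> norm_num)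
  · simpa using sum_pairInput x T S i j fun _ => 1

theorem sum_average_pairInput_fst [Fintype U] [Fintype B] [Fintype IZ] (x : (A × B) × C → U) (T : IY → A × B → C) {S : IZ → A → B}
    {N : ℕ} (hN : 0 < N) (hcard : Fintype.card IZ = N * Fintype.card B)
    (hS : ∀ a (g : B → ℝ), ∑ j, g (S j a) = N * ∑ b, g b) (i : IY) (g : U → ℝ) :
    ∑ u, ((Fintype.card IZ : ℝ)⁻¹ * ∑ j, pairInput x T S i j u) * g u
      = (Fintype.card A * Fintype.card B : ℝ)⁻¹ * ∑ v ∈ graphSet (T i), g (x v) := by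
  have hN' : (N : ℝ) ≠ 0 := by positivity
  simp only [mul_assoc, ← Finset.mul_sum, Finset.sum_mul]
  rw [Finset.sum_comm]
  simp only [sum_pairInput, ← Finset.mul_sum]
  rw [Finset.sum_comm]
  simp only [fun a => hS a fun b => g (x ((a, b), T i (a, b))), ← Finset.mul_sum]
  rw [sum_graphSet, Fintype.sum_prod_type, hcard]
  push_cast
  rw [mul_inv, mul_inv, mul_comm (N : ℝ)⁻¹]
  field_simp

theorem sum_average_pairInput_snd [Fintype U] [Fintype C] [Fintype IY] (x : (A × B) × C → U) {T : IY → A × B → C} (S : IZ → A → B)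
    {N : ℕ} (hN : 0 < N) (hcard : Fintype.card IY = N * Fintype.card C)
    (hT : ∀ κ (g : C → ℝ), ∑ i, g (T i κ) = N * ∑ c, g c) (j : IZ) (g : U → ℝ) :
    ∑ u, ((Fintype.card IY : ℝ)⁻¹ * ∑ i, pairInput x T S i j u) * g u
      = (Fintype.card A * Fintype.card C : ℝ)⁻¹ *
        ∑ v ∈ graphSet (S j) ×ˢ Finset.univ, g (x v) := by
  have hN' : (N : ℝ) ≠ 0 := by positivity
  simp only [mul_assoc, ← Finset.mul_sum, Finset.sum_mul]
  rw [Finset.sum_comm]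
  simp only [sum_pairInput, ← Finset.mul_sum]
  rw [Finset.sum_comm]
  simp only [fun a => hT (a, S j a) fun c => g (x ((a, S j a), c)), ← Finset.mul_sum]
  rw [Finset.sum_product, sum_graphSet, hcard]
  push_cast
  rw [mul_inv, mul_inv, mul_comm (N : ℝ)⁻¹]
  field_simp

end Codes

section Construction

/-- The decoding sets `G` rarely miss words drawn from `p`, and are small enough for the union of
`M` of them to be unlikely under the output distribution. -/
def SmallError {U V : Type*} [Fintype U] (p : U → ℝ) (w : U → V → ℝ) (G : U → Finset V)
    (ε M : ℝ) : Prop :=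
  ∑ u, p u * (1 - ∑ y ∈ G u, w u y) ≤ Real.exp (-(2 / ε)) ∧
  ∀ u, M * ∑ y ∈ G u, outDist p w y ≤ Real.exp (-(2 / ε))

theorem SmallError.not_IDGood_weight_lt {ι U V I : Type*} [Fintype ι] [DecidableEq ι] [Fintype U]
    [Fintype V] [DecidableEq V] [Fintype I] {p : U → ℝ} (hp : IsPMF p) {w : U → V → ℝ}
    (hw : IsChannel w) {G : U → Finset V} {ε M : ℝ} (hε : 0 < ε) (hM : 0 < M)
    (hG : SmallError p w G ε M) {S : I → Finset ι} (hS : ∀ m, ((S m).card : ℝ) = M)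
    (hSS : ∀ m m', m ≠ m' → ((S m ∩ S m').card : ℝ) ≤ ε * M)
    (hI : (Fintype.card I + (Fintype.card I : ℝ) ^ 2) * Real.exp (-M) < 1 / 2) :
    ∑ x with ¬ IDGood w G S ε M x, ∏ i, p (x i) < 1 / 2 :=
  (not_IDGood_weight_le hp hw hε hM (by rw [← Real.exp_add]; simp) hG.1 hG.2 hS hSS).trans_lt hI

variable {X Y Z : Type*} [Fintype X] [Fintype Y] [Fintype Z] {n : ℕ} {W : X → Y → Z → ℝ}
  {p : (Fin n → X) → ℝ} {ε : ℝ}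

theorem exists_isBCIDCode_of_smallError (hW : IsBC W) (hp : IsPMF p) (hε : 0 < ε)
    {A J L N₁ N₂ : ℕ} [NeZero A] [NeZero J] [NeZero L] (hN₁ : 0 < N₁) (hN₂ : 0 < N₂)
    (hJ : Real.exp (2 / ε) ≤ J) (hL : Real.exp (2 / ε) ≤ L)
    {GY : (Fin n → X) → Finset (Fin n → Y)} {GZ : (Fin n → X) → Finset (Fin n → Z)}
    (hGY : SmallError p (Wn (margY W) n) GY ε (A * J))
    (hGZ : SmallError p (Wn (margZ W) n) GZ ε (A * L))
    (hkY : ((N₁ * L : ℕ) + ((N₁ * L : ℕ) : ℝ) ^ 2) * Real.exp (-(A * J)) < 1 / 2)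
    (hkZ : ((N₂ * J : ℕ) + ((N₂ * J : ℕ) : ℝ) ^ 2) * Real.exp (-A) < 1 / 2) :
    ∃ (Q : Fin (N₁ * L) → Fin (N₂ * J) → (Fin n → X) → ℝ)
      (DY : Fin (N₁ * L) → Finset (Fin n → Y)) (DZ : Fin (N₂ * J) → Finset (Fin n → Z)),
      IsBCIDCode n (N₁ * L) (N₂ * J) W Q DY DZ ε (2 * ε) ε (2 * ε) := by
  have hA0 : (0 : ℝ) < A := by exact_mod_cast NeZero.pos A
  have hJ0 : (0 : ℝ) < J := by exact_mod_cast NeZero.pos J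
  have hL0 : (0 : ℝ) < L := by exact_mod_cast NeZero.pos L
  have hL1 : (1 : ℝ) ≤ L := by exact_mod_cast NeZero.pos L
  obtain ⟨T, hT, hTb⟩ := exists_balanced_family (K := Fin A × ZMod J) hε hL N₁ <| by
    simp only [Fintype.card_prod, Fintype.card_fin, ZMod.card]
    push_cast at hkY ⊢
    have : 0 ≤ ((N₁ : ℝ) * L) ^ 2 * Real.exp (-(A * J)) := by positivity
    linarith
  obtain ⟨S, hS, hSb⟩ := exists_balanced_family (K := Fin A) hε hJ N₂ <| by
    simp only [Fintype.card_fin]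
    push_cast at hkZ ⊢
    have : 0 ≤ ((N₂ : ℝ) * J) ^ 2 * Real.exp (-A) := by positivity
    linarith
  have hY := hGY.not_IDGood_weight_lt hp (isChannel_Wn (isChannel_margY hW)) hε (by positivity)
    (S := fun i => graphSet (T i)) (fun i => by simp [card_graphSet, ZMod.card])
    (fun i j hij => (Nat.cast_le.2 (card_graphSet_inter_le _ _)).trans (by
      simpa [ZMod.card] using hT i j hij)) (by simpa [ZMod.card] using hkY)
  have hZ := hGZ.not_IDGood_weight_lt hp (isChannel_Wn (isChannel_margZ hW)) hε (by positivity)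
    (S := fun j => graphSet (S j) ×ˢ (Finset.univ : Finset (ZMod L)))
    (fun i => by simp [card_graphSet, ZMod.card])
    (fun i j hij => (Nat.cast_le.2 (card_graphSet_product_inter_le _ _)).trans (by
      have := hS i j hij
      simp only [Fintype.card_fin] at this
      push_cast [ZMod.card]
      rw [← mul_assoc]
      exact mul_le_mul_of_nonneg_right this hL0.le))
    (by
      simp only [Fintype.card_prod, Fintype.card_fin, ZMod.card]
      refine lt_of_le_of_lt ?_ hkZ
      gcongr
      exact le_mul_of_one_le_right hA0.le hL1)
  obtain ⟨x, hx⟩ := (isPMF_pi (ι := (Fin A × ZMod J) × ZMod L) (p := fun _ => p)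
    fun _ => hp).exists_not_of_sum_lt_one (fun (b : Bool) x => if b then
      ¬ IDGood (Wn (margY W) n) GY (fun i => graphSet (T i)) ε (A * J) x else
      ¬ IDGood (Wn (margZ W) n) GZ
        (fun j => graphSet (S j) ×ˢ (Finset.univ : Finset (ZMod L))) ε (A * L) x) <| by
    rw [Fintype.sum_bool]
    refine lt_of_eq_of_lt ?_ ((add_lt_add hY hZ).trans_eq (by norm_num))
    congr 1 <;> exact Finset.sum_congr (by ext; simp) fun _ _ => rfl
  have hxY := hx true
  have hxZ := hx false
  simp only [if_true, Bool.false_eq_true, if_false, not_not] at hxY hxZ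
  refine exists_isBCIDCode_fin (fun i j => isPMF_pairInput x T S i j)
    (hxY.idCodeErr (isChannel_margY hW) (by positivity) fun i g => ?_)
    (hxZ.idCodeErr (isChannel_margZ hW) (by positivity) fun j g => ?_)
    (by simp [ZMod.card]) (by simp [ZMod.card])
  · simpa [ZMod.card] using
      sum_average_pairInput_fst x T hN₂ (by simp [ZMod.card]) hSb i g
  · simpa [ZMod.card] using
      sum_average_pairInput_snd x S hN₁ (by simp [ZMod.card]) hTb j g

theorem exists_isBCIDCode_of_smallError_fst (hW : IsBC W) (hp : IsPMF p) (hε : 0 < ε)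
    {A L N : ℕ} [NeZero A] [NeZero L] (hL : Real.exp (2 / ε) ≤ L)
    {G : (Fin n → X) → Finset (Fin n → Y)} (hG : SmallError p (Wn (margY W) n) G ε A)
    (hk : ((N * L : ℕ) + ((N * L : ℕ) : ℝ) ^ 2) * Real.exp (-A) < 1 / 2) :
    ∃ (Q : Fin (N * L) → Fin 1 → (Fin n → X) → ℝ)
      (DY : Fin (N * L) → Finset (Fin n → Y)) (DZ : Fin 1 → Finset (Fin n → Z)),
      IsBCIDCode n (N * L) 1 W Q DY DZ ε (2 * ε) ε (2 * ε) := by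
  have hA0 : (0 : ℝ) < A := by exact_mod_cast NeZero.pos A
  obtain ⟨T, hT, -⟩ := exists_balanced_family (K := Fin A × Unit) hε hL N <| by
    simp only [Fintype.card_prod, Fintype.card_fin, Fintype.card_unit, mul_one]
    push_cast at hk ⊢
    have : 0 ≤ ((N : ℝ) * L) ^ 2 * Real.exp (-A) := by positivity
    linarith
  have hY := hG.not_IDGood_weight_lt hp (isChannel_Wn (isChannel_margY hW)) hε hA0
    (S := fun i => graphSet (T i)) (fun i => by simp [card_graphSet])
    (fun i j hij => (Nat.cast_le.2 (card_graphSet_inter_le _ _)).trans (by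
      simpa using hT i j hij)) (by simpa [ZMod.card] using hk)
  obtain ⟨x, hx⟩ := (isPMF_pi (ι := (Fin A × Unit) × ZMod L) (p := fun _ => p)
    fun _ => hp).exists_not_of_sum_lt_one (fun (_ : Unit) x =>
      ¬ IDGood (Wn (margY W) n) G (fun i => graphSet (T i)) ε A x) <| by
    rw [Fintype.sum_unique]
    refine lt_of_eq_of_lt ?_ (hY.trans (by norm_num))
    congr!
  have hxY := not_not.1 (hx ())
  refine exists_isBCIDCode_fin (IZ := Unit) (fun i j => isPMF_pairInput x T (fun _ _ => ()) i j)
    (hxY.idCodeErr (isChannel_margY hW) hA0 fun i g => ?_)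
    (idCodeErr_univ _ _ hε.le) (by simp [ZMod.card]) (by simp)
  simpa using sum_average_pairInput_fst (IZ := Unit) (S := fun _ _ => ()) x T one_pos (by simp)
    (fun _ _ => by simp) i g

end Construction

section Asymptotics

theorem natCeil_le_two_mul {a : ℝ} (ha : 1 ≤ a) : (⌈a⌉₊ : ℝ) ≤ 2 * a := by
  linarith [Nat.ceil_lt_add_one (zero_le_one.trans ha)]

theorem eventually_exists_smallError {X Y : Type*} [Fintype X] [Fintype Y] {P : X → ℝ}
    (hP : IsPMF P) {W : X → Y → ℝ} (hW : IsChannel W) (ε : ℝ) {ρ : ℝ} (hρ : ρ < mutInf P W)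
    (C : ℝ) :
    ∀ᶠ n : ℕ in Filter.atTop, ∃ G : (Fin n → X) → Finset (Fin n → Y),
      ∀ M, 0 ≤ M → M ≤ C * Real.exp (n * ρ) →
        SmallError (fun x : Fin n → X => ∏ i, P (x i)) (Wn W n) G ε M := by
  obtain ⟨ρ', h1, h2⟩ := exists_between hρ
  filter_upwards [eventually_typSet_miss_le hP hW h2 (Real.exp_pos (-(2 / ε))),
    eventually_poly_le_exp (C * Real.exp (2 / ε)) 0 (sub_pos.2 h1)] with n hn hC
  refine ⟨typSet P W n ρ', fun M hM0 hM => ⟨hn, fun x => ?_⟩⟩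
  refine (mul_le_mul hM (sum_typSet_outDist_le hW ρ' x) (Finset.sum_nonneg fun y _ =>
    outDist_nonneg (isPMF_pi (p := fun _ => P) fun _ => hP).1 (isChannel_Wn hW).1 y)
    (hM0.trans hM)).trans ?_
  rw [pow_zero, mul_one] at hC
  calc C * Real.exp (n * ρ) * Real.exp (-(n * ρ'))
      = C * Real.exp (2 / ε) * (Real.exp (n * ρ - n * ρ' - 2 / ε)) := by
        rw [Real.exp_sub, Real.exp_sub, Real.exp_neg]
        field_simp
    _ ≤ Real.exp ((ρ' - ρ) * n) * Real.exp (n * ρ - n * ρ' - 2 / ε) := by gcongr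
    _ = Real.exp (-(2 / ε)) := by
        rw [← Real.exp_add]
        ring_nf

theorem eventually_weight_lt {R ρ s C : ℝ} (hR : 0 ≤ R) (hRρ : R < ρ) (hs : 0 ≤ s) (hC : 0 < C) :
    ∀ᶠ n : ℕ in Filter.atTop, ∀ k m : ℝ, 1 ≤ k →
      k ≤ C * Real.exp (Real.exp (n * R) + n * s) → Real.exp (n * ρ) ≤ m →
        (k + k ^ 2) * Real.exp (-m) < 1 / 2 := by
  filter_upwards [eventually_poly_le_exp (|Real.log (4 * C ^ 2)| + 1 + 2 + 2 * s) 1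
    (sub_pos.2 hRρ)] with n hn k m hk1 hk hm
  set c := Real.log (4 * C ^ 2) with hc
  set E := Real.exp (n * R)
  have hE : 1 ≤ E := Real.one_le_exp (by positivity)
  have hρ : Real.exp (n * ρ) = Real.exp ((ρ - R) * n) * E := by
    rw [← Real.exp_add]
    ring_nf
  have h1 : c + 2 * (E + n * s) < m := by
    refine lt_of_lt_of_le ?_ hm
    rw [hρ]
    refine lt_of_lt_of_le ?_ (mul_le_mul_of_nonneg_right hn (zero_le_one.trans hE))
    have hn0 : (0 : ℝ) ≤ n := n.cast_nonneg
    have hcl := le_abs_self c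
    have hc0 := abs_nonneg c
    have h2 : (|c| + 1) * 1 ≤ (|c| + 1) * (((n : ℝ) + 1) * E) := by
      gcongr
      nlinarith
    have h3 : 2 * E ≤ 2 * (((n : ℝ) + 1) * E) := by nlinarith
    have h4 : 2 * s * n ≤ 2 * s * (((n : ℝ) + 1) * E) := by
      gcongr
      nlinarith
    rw [pow_one]
    nlinarith
  have h2 : k + k ^ 2 ≤ 2 * (C * Real.exp (E + n * s)) ^ 2 := by
    have : k ^ 2 ≤ (C * Real.exp (E + n * s)) ^ 2 := by gcongr
    nlinarith
  have h3 : 2 * (C * Real.exp (E + n * s)) ^ 2 = Real.exp (c + 2 * (E + n * s)) / 2 := by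
    rw [Real.exp_add c, hc, Real.exp_log (by positivity), two_mul (E + n * s),
      Real.exp_add (E + n * s)]
    ring
  calc (k + k ^ 2) * Real.exp (-m) ≤ Real.exp (c + 2 * (E + n * s)) / 2 * Real.exp (-m) := by
        rw [← h3]
        gcongr
    _ = Real.exp (c + 2 * (E + n * s) - m) / 2 := by rw [sub_eq_add_neg _ m, Real.exp_add _ (-m)]; ring
    _ < 1 / 2 := by
        have := Real.exp_lt_one_iff.2 (sub_neg.2 h1)
        linarith

theorem rate_le_of_exp_exp_le {n : ℕ} (hn : 0 < n) {R k : ℝ}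
    (hk : Real.exp (Real.exp (n * R)) ≤ k) : R ≤ (1 / n) * Real.log (Real.log k) := by
  have hn' : (0 : ℝ) < n := by exact_mod_cast hn
  have hk0 : 0 < k := (Real.exp_pos _).trans_le hk
  have h1 : Real.exp (n * R) ≤ Real.log k := (Real.le_log_iff_exp_le hk0).2 hk
  have h2 : n * R ≤ Real.log (Real.log k) :=
    (Real.le_log_iff_exp_le ((Real.exp_pos _).trans_le h1)).2 h1
  rw [one_div, inv_mul_eq_div, le_div_iff₀ hn', mul_comm]
  exact h2

end Asymptotics

section Achievability

theorem IsBC.swap {X Y Z : Type*} [Fintype Y] [Fintype Z] {W : X → Y → Z → ℝ}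
    (hW : IsBC W) : IsBC fun x z y => W x y z :=
  ⟨fun x z y => hW.1 x y z, fun x => by rw [Finset.sum_comm]; exact hW.2 x⟩

variable {X Y Z : Type*} [Fintype X] [Fintype Y] [Fintype Z] {W : X → Y → Z → ℝ}

theorem IsBCIDCode.mono {n kY kZ : ℕ} {Q : Fin kY → Fin kZ → (Fin n → X) → ℝ}
    {DY : Fin kY → Finset (Fin n → Y)} {DZ : Fin kZ → Finset (Fin n → Z)}
    {a b c d a' b' c' d' : ℝ} (h : IsBCIDCode n kY kZ W Q DY DZ a b c d) (ha : a ≤ a')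
    (hb : b ≤ b') (hc : c ≤ c') (hd : d ≤ d') : IsBCIDCode n kY kZ W Q DY DZ a' b' c' d' :=
  ⟨h.1, h.2.1.mono ha hb, h.2.2.mono hc hd⟩

theorem exists_error_level {a b c d : ℝ} (ha : 0 < a) (hb : 0 < b) (hc : 0 < c) (hd : 0 < d) :
    ∃ ε, 0 < ε ∧ ε ≤ a ∧ 2 * ε ≤ b ∧ ε ≤ c ∧ 2 * ε ≤ d := by
  have h : 0 < min (min a b) (min c d) := by positivity
  have h1 := min_le_left (min a b) (min c d)
  have h2 := min_le_right (min a b) (min c d)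
  have := min_le_left a b
  have := min_le_right a b
  have := min_le_left c d
  have := min_le_right c d
  exact ⟨min (min a b) (min c d) / 2, by linarith, by linarith, by linarith, by linarith,
    by linarith⟩

theorem BCAchievable.swap {R : ℝ × ℝ} (h : BCAchievable W R) :
    BCAchievable (fun x z y => W x y z) R.swap := by
  refine ⟨h.2.1, h.1, fun a b c d ha hb hc hd => ?_⟩
  obtain ⟨n₀, hn₀⟩ := h.2.2 c d a b hc hd ha hb
  refine ⟨n₀, fun n hn => ?_⟩
  obtain ⟨kY, kZ, Q, DY, DZ, hQ, hY, hZ⟩ := hn₀ n hn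
  exact ⟨kZ, kY, fun j i => Q i j, DZ, DY, ⟨fun j i => hQ.1 i j, hQ.2.2, hQ.2.1⟩, hZ, hY⟩

theorem bcAchievable_zero (hne : ∃ P : X → ℝ, IsPMF P) : BCAchievable W (0, 0) := by
  refine ⟨le_rfl, le_rfl, fun a b c d ha hb hc hd => ⟨0, fun n _ => ?_⟩⟩
  obtain ⟨P, hP⟩ := hne
  refine ⟨1, 1, fun _ _ x => ∏ i, P (x i), fun _ => Finset.univ, fun _ => Finset.univ,
    ⟨fun _ _ => isPMF_pi (p := fun _ => P) fun _ => hP, idCodeErr_univ _ _ ha.le,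
      idCodeErr_univ _ _ hc.le⟩, ?_, ?_⟩ <;> simp

theorem bcAchievable_fst (hW : IsBC W) {P : X → ℝ} (hP : IsPMF P) {R : ℝ} (hR : 0 < R)
    (hRI : R < mutInf P (margY W)) : BCAchievable W (R, 0) := by
  refine ⟨hR.le, le_rfl, fun a b c d ha hb hc hd => ?_⟩
  obtain ⟨ε, hε, ha', hb', hc', hd'⟩ := exists_error_level ha hb hc hd
  obtain ⟨ρ, hRρ, hρI⟩ := exists_between hRI
  set L := ⌈Real.exp (2 / ε)⌉₊ with hLdef
  have hL : Real.exp (2 / ε) ≤ L := Nat.le_ceil _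
  have hL0 : 0 < L := Nat.ceil_pos.2 (Real.exp_pos _)
  have : NeZero L := ⟨hL0.ne'⟩
  have hL1 : (1 : ℝ) ≤ L := by exact_mod_cast hL0
  rw [← Filter.eventually_atTop]
  filter_upwards [eventually_exists_smallError hP (isChannel_margY hW) ε hρI 2,
    eventually_weight_lt hR.le hRρ le_rfl (C := 2 * L) (by positivity),
    Filter.eventually_gt_atTop 0] with n ⟨G, hG⟩ hk hn
  set A := ⌈Real.exp (n * ρ)⌉₊
  set N := ⌈Real.exp (Real.exp (n * R))⌉₊
  have : NeZero A := ⟨(Nat.ceil_pos.2 (Real.exp_pos _)).ne'⟩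
  have hN0 : 0 < N := Nat.ceil_pos.2 (Real.exp_pos _)
  have hN : Real.exp (Real.exp (n * R)) ≤ N := Nat.le_ceil _
  have hN2 : (N : ℝ) ≤ 2 * Real.exp (Real.exp (n * R)) :=
    natCeil_le_two_mul (Real.one_le_exp (Real.exp_pos _).le)
  have hρ0 : 0 < ρ := hR.trans hRρ
  obtain ⟨Q, DY, DZ, hQ⟩ := exists_isBCIDCode_of_smallError_fst (A := A) (N := N) hW
    (isPMF_pi (ι := Fin n) (p := fun _ => P) fun _ => hP) hε hL
    (hG A A.cast_nonneg (natCeil_le_two_mul (Real.one_le_exp (by positivity))))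
    (hk _ _ (by exact_mod_cast Nat.mul_pos hN0 hL0) (by
      rw [mul_zero, add_zero]
      push_cast
      nlinarith) (Nat.le_ceil _))
  refine ⟨N * L, 1, Q, DY, DZ, hQ.mono ha' hb' hc' hd', ⟨fun _ => ?_, fun h => ?_⟩, by simp⟩
  · refine rate_le_of_exp_exp_le hn ?_
    push_cast
    exact hN.trans (le_mul_of_one_le_right (Nat.cast_nonneg _) hL1)
  · exact absurd h hR.ne'

theorem bcAchievable_of_le (hW : IsBC W) {P : X → ℝ} (hP : IsPMF P) {R₁ R₂ : ℝ} (hR₂ : 0 < R₂)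
    (hR : R₂ ≤ R₁) (hI₁ : R₁ < mutInf P (margY W)) (hI₂ : R₂ < mutInf P (margZ W)) :
    BCAchievable W (R₁, R₂) := by
  have hR₁ : 0 < R₁ := hR₂.trans_le hR
  refine ⟨hR₁.le, hR₂.le, fun a b c d ha hb hc hd => ?_⟩
  obtain ⟨ε, hε, ha', hb', hc', hd'⟩ := exists_error_level ha hb hc hd
  obtain ⟨ρ₂, hRρ₂, hρI₂⟩ := exists_between (lt_min hI₂ (hR.trans_lt hI₁))
  obtain ⟨ρ₁, hRρ₁, hρI₁⟩ := exists_between (max_lt hI₁ (hρI₂.trans_le (min_le_right _ _)))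
  obtain ⟨hRρ₁, hρρ⟩ := max_lt_iff.1 hRρ₁
  replace hρI₂ := hρI₂.trans_le (min_le_left _ _)
  set L := ⌈Real.exp (2 / ε)⌉₊ with hLdef
  have hL : Real.exp (2 / ε) ≤ L := Nat.le_ceil _
  have hL0 : 0 < L := Nat.ceil_pos.2 (Real.exp_pos _)
  have : NeZero L := ⟨hL0.ne'⟩
  have hL1 : (1 : ℝ) ≤ L := by exact_mod_cast hL0
  rw [← Filter.eventually_atTop]
  filter_upwards [eventually_exists_smallError hP (isChannel_margY hW) ε hρI₁ 4,
    eventually_exists_smallError hP (isChannel_margZ hW) ε hρI₂ (2 * L),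
    eventually_weight_lt hR₁.le hRρ₁ le_rfl (C := 2 * L) (by positivity),
    eventually_weight_lt hR₂.le hRρ₂ (sub_pos.2 hρρ).le (C := 4) (by positivity),
    eventually_poly_le_exp (Real.exp (2 / ε)) 0 (sub_pos.2 hρρ),
    Filter.eventually_gt_atTop 0] with n ⟨GY, hGY⟩ ⟨GZ, hGZ⟩ hkY hkZ hJ hn
  have hρ₂ : 0 < ρ₂ := hR₂.trans hRρ₂
  have hδ : 0 < ρ₁ - ρ₂ := sub_pos.2 hρρ
  set A := ⌈Real.exp (n * ρ₂)⌉₊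
  set J := ⌈Real.exp (n * (ρ₁ - ρ₂))⌉₊
  set N₁ := ⌈Real.exp (Real.exp (n * R₁))⌉₊
  set N₂ := ⌈Real.exp (Real.exp (n * R₂))⌉₊
  have : NeZero A := ⟨(Nat.ceil_pos.2 (Real.exp_pos _)).ne'⟩
  have hJ0 : 0 < J := Nat.ceil_pos.2 (Real.exp_pos _)
  have : NeZero J := ⟨hJ0.ne'⟩
  have hJ1 : (1 : ℝ) ≤ J := by exact_mod_cast hJ0
  have hN₁0 : 0 < N₁ := Nat.ceil_pos.2 (Real.exp_pos _)
  have hN₂0 : 0 < N₂ := Nat.ceil_pos.2 (Real.exp_pos _)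
  have hA : Real.exp (n * ρ₂) ≤ A := Nat.le_ceil _
  have hA2 : (A : ℝ) ≤ 2 * Real.exp (n * ρ₂) :=
    natCeil_le_two_mul (Real.one_le_exp (by positivity))
  have hJe : Real.exp (n * (ρ₁ - ρ₂)) ≤ J := Nat.le_ceil _
  have hJ2 : (J : ℝ) ≤ 2 * Real.exp (n * (ρ₁ - ρ₂)) :=
    natCeil_le_two_mul (Real.one_le_exp (by positivity))
  have hN₁ : Real.exp (Real.exp (n * R₁)) ≤ N₁ := Nat.le_ceil _
  have hN₁2 : (N₁ : ℝ) ≤ 2 * Real.exp (Real.exp (n * R₁)) :=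
    natCeil_le_two_mul (Real.one_le_exp (Real.exp_pos _).le)
  have hN₂ : Real.exp (Real.exp (n * R₂)) ≤ N₂ := Nat.le_ceil _
  have hN₂2 : (N₂ : ℝ) ≤ 2 * Real.exp (Real.exp (n * R₂)) :=
    natCeil_le_two_mul (Real.one_le_exp (Real.exp_pos _).le)
  have hsplit : Real.exp (n * ρ₁) = Real.exp (n * ρ₂) * Real.exp (n * (ρ₁ - ρ₂)) := by
    rw [← Real.exp_add]
    ring_nf
  obtain ⟨Q, DY, DZ, hQ⟩ := exists_isBCIDCode_of_smallError (A := A) (J := J) hW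
    (isPMF_pi (ι := Fin n) (p := fun _ => P) fun _ => hP) hε hN₁0 hN₂0
    (by
      rw [pow_zero, mul_one, mul_comm _ (n : ℝ)] at hJ
      exact hJ.trans hJe) hL
    (hGY (A * J) (by positivity) (by
      rw [hsplit]
      calc (A : ℝ) * J ≤ (2 * Real.exp (n * ρ₂)) * (2 * Real.exp (n * (ρ₁ - ρ₂))) := by gcongr
        _ = _ := by ring))
    (hGZ (A * L) (by positivity) (by nlinarith))
    (hkY _ _ (by exact_mod_cast Nat.mul_pos hN₁0 hL0) (by
      rw [mul_zero, add_zero]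
      push_cast
      nlinarith) (by
      rw [hsplit]
      gcongr))
    (hkZ _ _ (by exact_mod_cast Nat.mul_pos hN₂0 hJ0) (by
      push_cast
      rw [Real.exp_add]
      calc (N₂ : ℝ) * J
          ≤ (2 * Real.exp (Real.exp (n * R₂))) * (2 * Real.exp (n * (ρ₁ - ρ₂))) := by gcongr
        _ = _ := by ring) hA)
  refine ⟨N₁ * L, N₂ * J, Q, DY, DZ, hQ.mono ha' hb' hc' hd', ⟨fun _ => ?_, fun h => ?_⟩,
    fun _ => ?_, fun h => ?_⟩
  · refine rate_le_of_exp_exp_le hn ?_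
    push_cast
    exact hN₁.trans (le_mul_of_one_le_right (Nat.cast_nonneg _) hL1)
  · exact absurd h hR₁.ne'
  · refine rate_le_of_exp_exp_le hn ?_
    push_cast
    exact hN₂.trans (le_mul_of_one_le_right (Nat.cast_nonneg _) hJ1)
  · exact absurd h hR₂.ne'

theorem bcAchievable_of_lt (hW : IsBC W) {P : X → ℝ} (hP : IsPMF P) {R : ℝ × ℝ}
    (h₁ : R.1 = 0 ∨ 0 < R.1 ∧ R.1 < mutInf P (margY W))
    (h₂ : R.2 = 0 ∨ 0 < R.2 ∧ R.2 < mutInf P (margZ W)) : BCAchievable W R := by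
  obtain ⟨R₁, R₂⟩ := R
  rcases h₁ with rfl | ⟨h₁, hI₁⟩ <;> rcases h₂ with rfl | ⟨h₂, hI₂⟩
  · exact bcAchievable_zero ⟨P, hP⟩
  · exact (bcAchievable_fst hW.swap hP h₂ hI₂).swap
  · exact bcAchievable_fst hW hP h₁ hI₁
  · rcases le_total R₂ R₁ with h | h
    · exact bcAchievable_of_le hW hP h₂ h hI₁ hI₂
    · exact (bcAchievable_of_le hW.swap hP h₁ h hI₂ hI₁).swap

end Achievability

theorem isCompact_setOf_isPMF (X : Type*) [Fintype X] : IsCompact {P : X → ℝ | IsPMF P} :=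
  isCompact_stdSimplex ℝ X

theorem isClosed_rateRegion {X Y Z : Type*} [Fintype X] [Fintype Y] [Fintype Z]
    {W : X → Y → ℝ} {V : X → Z → ℝ} (hW : ∀ x y, 0 ≤ W x y) (hV : ∀ x z, 0 ≤ V x z) :
    IsClosed {p : ℝ × ℝ | 0 ≤ p.1 ∧ 0 ≤ p.2 ∧
      ∃ P : X → ℝ, IsPMF P ∧ p.1 ≤ mutInf P W ∧ p.2 ≤ mutInf P V} := by
  refine IsSeqClosed.isClosed fun u p hu hup => ?_
  choose h1 h2 P hP hPW hPV using hu
  obtain ⟨Q, hQ, φ, hφ, hlim⟩ := (isCompact_setOf_isPMF X).tendsto_subseq hP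
  have hlim' : Filter.Tendsto (P ∘ φ) Filter.atTop (nhdsWithin Q {P : X → ℝ | IsPMF P}) :=
    tendsto_nhdsWithin_iff.2 ⟨hlim, Filter.Eventually.of_forall fun k => hP (φ k)⟩
  have hu1 := (continuous_fst.tendsto p).comp hup
  have hu2 := (continuous_snd.tendsto p).comp hup
  exact ⟨ge_of_tendsto' hu1 h1, ge_of_tendsto' hu2 h2, Q, hQ,
    le_of_tendsto_of_tendsto' (hu1.comp hφ.tendsto_atTop)
      ((continuousOn_mutInf hW Q hQ).tendsto.comp hlim') fun k => hPW (φ k),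
    le_of_tendsto_of_tendsto' (hu2.comp hφ.tendsto_atTop)
      ((continuousOn_mutInf hV Q hQ).tendsto.comp hlim') fun k => hPV (φ k)⟩

/-- **Theorem 3.** The average-error ID capacity region of the
two-receiver BC is the set of rate pairs `(R_Y, R_Z)` for which some input PMF
`P` satisfies `R_Y ≤ I(P, W_Y)` and `R_Z ≤ I(P, W_Z)`. -/
theorem bc_id_capacity_region
    {X Y Z : Type} [Fintype X] [Fintype Y] [Fintype Z]
    [Nonempty X] [Nonempty Y] [Nonempty Z]
    (W : X → Y → Z → ℝ) (hW : IsBC W) :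
    closure {p : ℝ × ℝ | BCAchievable W p}
      = {p : ℝ × ℝ | 0 ≤ p.1 ∧ 0 ≤ p.2 ∧
          ∃ P : X → ℝ, IsPMF P ∧
            p.1 ≤ mutInf P (margY W) ∧ p.2 ≤ mutInf P (margZ W)} := by
  have hY := isChannel_margY hW
  have hZ := isChannel_margZ hW
  have hδ := tendsto_one_div_add_atTop_nhds_zero_nat (𝕜 := ℝ)
  apply subset_antisymm
  · refine closure_minimal (fun p hp => ?_) (isClosed_rateRegion hY.1 hZ.1)
    have hmax : ∀ a : ℝ, 0 ≤ a → Filter.Tendsto (fun k : ℕ => max (a - 1 / ((k : ℝ) + 1)) 0)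
        Filter.atTop (nhds a) := fun a ha => by
      simpa [ha] using (hδ.const_sub a).max (tendsto_const_nhds (x := (0 : ℝ)))
    refine (isClosed_rateRegion hY.1 hZ.1).mem_of_tendsto
      ((hmax p.1 hp.1).prodMk_nhds (hmax p.2 hp.2.1)) (Filter.Eventually.of_forall fun k => ?_)
    obtain ⟨P, hP, h1, h2⟩ := hp.exists_isPMF hW (Nat.one_div_pos_of_nat (α := ℝ) (n := k))
    exact ⟨le_max_right _ _, le_max_right _ _, P, hP, max_le h1 (mutInf_nonneg hP hY),
      max_le h2 (mutInf_nonneg hP hZ)⟩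
  · rintro p ⟨hp1, hp2, P, hP, h1, h2⟩
    have hmul : ∀ a : ℝ, Filter.Tendsto (fun k : ℕ => (1 - 1 / ((k : ℝ) + 1)) * a)
        Filter.atTop (nhds a) := fun a => by
      simpa using (hδ.const_sub 1).mul_const a
    have hlt : ∀ (k : ℕ) {a I : ℝ}, 0 ≤ a → a ≤ I →
        (1 - 1 / (((k + 1 : ℕ) : ℝ) + 1)) * a = 0 ∨ 0 < (1 - 1 / (((k + 1 : ℕ) : ℝ) + 1)) * a ∧
          (1 - 1 / (((k + 1 : ℕ) : ℝ) + 1)) * a < I := fun k a I ha haI => by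
      rcases ha.eq_or_lt with rfl | ha
      · exact Or.inl (mul_zero _)
      · have hk : 0 < 1 / (((k + 1 : ℕ) : ℝ) + 1) := Nat.one_div_pos_of_nat
        have hk1 : 1 / (((k + 1 : ℕ) : ℝ) + 1) < 1 := by
          rw [div_lt_one (by positivity)]
          push_cast
          linarith [k.cast_nonneg (α := ℝ)]
        exact Or.inr ⟨mul_pos (by linarith) ha, by nlinarith⟩
    exact mem_closure_of_tendsto
      (((hmul p.1).prodMk_nhds (hmul p.2)).comp (Filter.tendsto_add_atTop_nat 1))
      (Filter.Eventually.of_forall fun k => bcAchievable_of_lt hW hP (hlt k hp1 h1) (hlt k hp2 h2))
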